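/- arXiv:2305.14155 — 2 statements merged into one kernel-verified Lean document; each statement's English description precedes it below -/
import Mathlib

section
/- Let d > 1 be an integer and r > 0. Let X ⊆ ℝ^d be nonempty and suppose A = X^r is nonempty (so A is a nonempty r-ball body). Then the Minkowski sum A + (−A^r) = {a − b : a ∈ A, b ∈ A^r} equals the closed ball B[o, r] of radius r centered at the origin o. -/
/-! Every difference `a - b` with `a ∈ A` and `b ∈ A^r` has norm at most `r` by the definition of
`A^r`. Since `A - A^r` is convex and `B[o, r]` is the convex hull of its boundary sphere, the
converse only requires `r • u ∈ A - A^r` for every unit vector `u`. If `a` maximizes `⟪u, ·⟫` on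
`A`, then `A ⊆ B[a - r • u, r]`, that is, `a - r • u ∈ A^r`, and `r • u = a - (a - r • u)`.

Both the existence of `a` and the inclusion `A ⊆ B[a - r • u, r]` come from one property of balls
of radius `r` that passes to intersections: around each point of a segment between two points of
`A`, the set `A` contains a ball whose radius is quadratic in the length of the segment. Pushing
from the segment in direction `u` shows that maximizing sequences of `⟪u, ·⟫` are Cauchy, so that
completeness can replace compactness, and that `⟪u, ·⟫` decays quadratically away from `a`. -/

open Metric Pointwise

noncomputable section

/-- The `r`-ball body generated by a set `X ⊆ ℝ^d`. -/
def ballBody {d : ℕ} (r : ℝ) (X : Set (EuclideanSpace ℝ (Fin d))) :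
    Set (EuclideanSpace ℝ (Fin d)) :=
  ⋂ x ∈ X, closedBall x r

open AffineMap Bornology Filter Set Topology

section BallDual

/-- The `r`-dual `X^r` of a set `X` in a metric space: the points within distance `r` of all of
`X`. It extends `ballBody`, to which it is definitionally equal on `ℝ^d`. -/
def ballDual {α : Type*} [PseudoMetricSpace α] (r : ℝ) (X : Set α) : Set α :=
  ⋂ x ∈ X, closedBall x r

variable {α : Type*} [PseudoMetricSpace α] {r : ℝ} {X : Set α}

lemma mem_ballDual {p : α} : p ∈ ballDual r X ↔ ∀ x ∈ X, dist p x ≤ r := by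
  simp [ballDual]

lemma isClosed_ballDual : IsClosed (ballDual r X) :=
  isClosed_biInter fun _ _ => isClosed_closedBall

lemma isBounded_ballDual (hX : X.Nonempty) : IsBounded (ballDual r X) :=
  let ⟨_, hx⟩ := hX
  isBounded_closedBall.subset (biInter_subset_of_mem hx)

lemma add_neg_ballDual_subset_closedBall {E : Type*} [SeminormedAddCommGroup E] (r : ℝ)
    (A : Set E) : A + -ballDual r A ⊆ closedBall 0 r := by
  rintro _ ⟨a, ha, b, hb, rfl⟩
  have hab : dist (-b) a ≤ r := mem_ballDual.1 hb a ha
  rwa [dist_comm, dist_eq_norm, sub_neg_eq_add, ← mem_closedBall_zero_iff] at hab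

end BallDual

lemma dist_sq_lineMap {E P : Type*} [SeminormedAddCommGroup E] [InnerProductSpace ℝ E]
    [PseudoMetricSpace P] [NormedAddTorsor E P] (x y c : P) (t : ℝ) :
    dist (lineMap x y t) c ^ 2 =
      (1 - t) * dist x c ^ 2 + t * dist y c ^ 2 - t * (1 - t) * dist x y ^ 2 := by
  have hline : lineMap x y t -ᵥ c = (x -ᵥ c) + t • ((y -ᵥ c) - (x -ᵥ c)) := by
    rw [lineMap_apply, vadd_vsub_assoc, vsub_sub_vsub_cancel_right, add_comm]
  rw [dist_comm x y, dist_eq_norm_vsub E, dist_eq_norm_vsub E x, dist_eq_norm_vsub E y,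
    dist_eq_norm_vsub E y x, hline, ← vsub_sub_vsub_cancel_right y x c, norm_add_sq_real,
    norm_smul, mul_pow, Real.norm_eq_abs, sq_abs, inner_smul_right, inner_sub_right,
    norm_sub_sq_real, real_inner_self_eq_norm_sq, real_inner_comm]
  ring

/-- Strongly convex sets of radius `r`: with `x` and `y` they contain a ball around each point of
the segment `[x, y]`, as every intersection of balls of radius `r` does. Only meaningful for
`0 < r`: the radius `t (1 - t) |x - y|² / (2 r)` is `0` by convention if `r = 0`, and balls of
negative radius are empty. -/
def IsStronglyConvex {E : Type*} [SeminormedAddCommGroup E] [NormedSpace ℝ E] (r : ℝ)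
    (A : Set E) : Prop :=
  ∀ ⦃x⦄, x ∈ A → ∀ ⦃y⦄, y ∈ A → ∀ ⦃t : ℝ⦄, t ∈ Icc 0 1 →
    closedBall (lineMap x y t) (t * (1 - t) * dist x y ^ 2 / (2 * r)) ⊆ A

namespace IsStronglyConvex

lemma iInter {E : Type*} [SeminormedAddCommGroup E] [NormedSpace ℝ E] {ι : Sort*} {r : ℝ}
    {A : ι → Set E} (hA : ∀ i, IsStronglyConvex r (A i)) : IsStronglyConvex r (⋂ i, A i) :=
  fun _ hx _ hy _ ht => subset_iInter fun i =>
    hA i (mem_iInter.1 hx i) (mem_iInter.1 hy i) ht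

lemma convex {E : Type*} [SeminormedAddCommGroup E] [NormedSpace ℝ E] {r : ℝ} {A : Set E}
    (hA : IsStronglyConvex r A) (hr : 0 ≤ r) : Convex ℝ A := by
  refine convex_iff_segment_subset.2 fun x hx y hy => ?_
  rw [segment_eq_image_lineMap]
  rintro _ ⟨t, ht, rfl⟩
  have ht' : 0 ≤ 1 - t := sub_nonneg.2 ht.2
  have ht0 : 0 ≤ t := ht.1
  exact hA hx hy ht (mem_closedBall_self (by positivity))

end IsStronglyConvex

lemma isStronglyConvex_closedBall {E : Type*} [SeminormedAddCommGroup E] [InnerProductSpace ℝ E]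
    {r : ℝ} (hr : 0 < r) (c : E) : IsStronglyConvex r (closedBall c r) := by
  intro x hx y hy t ht
  rw [mem_closedBall] at hx hy
  apply closedBall_subset_closedBall'
  set ρ := t * (1 - t) * dist x y ^ 2 / (2 * r) with hρ
  have hρr : t * (1 - t) * dist x y ^ 2 = 2 * r * ρ := by rw [hρ]; field_simp
  have hdist : dist (lineMap x y t) c ^ 2 ≤ r ^ 2 - 2 * r * ρ :=
    calc dist (lineMap x y t) c ^ 2
        = (1 - t) * dist x c ^ 2 + t * dist y c ^ 2 - 2 * r * ρ := by
          rw [dist_sq_lineMap, hρr]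
      _ ≤ (1 - t) * r ^ 2 + t * r ^ 2 - 2 * r * ρ := by
          have ht' : 0 ≤ 1 - t := sub_nonneg.2 ht.2
          have ht0 : 0 ≤ t := ht.1
          gcongr
      _ = r ^ 2 - 2 * r * ρ := by ring
  have hρ_le : ρ ≤ r := by nlinarith [sq_nonneg (dist (lineMap x y t) c)]
  have hdist_le : dist (lineMap x y t) c ≤ r - ρ :=
    le_of_sq_le_sq (by linarith [sq_nonneg ρ, sub_sq r ρ]) (sub_nonneg.2 hρ_le)
  linarith

lemma isStronglyConvex_ballDual {E : Type*} [SeminormedAddCommGroup E] [InnerProductSpace ℝ E]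
    {r : ℝ} (hr : 0 < r) (X : Set E) : IsStronglyConvex r (ballDual r X) :=
  .iInter fun x => .iInter fun _ => isStronglyConvex_closedBall hr x

namespace IsStronglyConvex

variable {E : Type*} [SeminormedAddCommGroup E] [InnerProductSpace ℝ E] {r : ℝ} {A : Set E} {u : E}

lemma inner_lineMap_add_le (hA : IsStronglyConvex r A) (hr : 0 ≤ r) (hu : ‖u‖ = 1) {s : ℝ}
    (hs : ∀ z ∈ A, inner ℝ u z ≤ s) {x y : E} (hx : x ∈ A) (hy : y ∈ A) {t : ℝ}
    (ht : t ∈ Icc 0 1) :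
    inner ℝ u (lineMap x y t) + t * (1 - t) * dist x y ^ 2 / (2 * r) ≤ s := by
  set ρ := t * (1 - t) * dist x y ^ 2 / (2 * r)
  have hρ : 0 ≤ ρ := by
    have ht' : 0 ≤ 1 - t := sub_nonneg.2 ht.2
    have ht0 : 0 ≤ t := ht.1
    positivity
  have hmem : lineMap x y t + ρ • u ∈ A := hA hx hy ht (by
    rw [mem_closedBall, dist_self_add_left, norm_smul, hu, mul_one, Real.norm_of_nonneg hρ])
  simpa [inner_add_right, inner_smul_right, hu] using hs _ hmem

lemma dist_sq_le_of_sub_le_inner (hA : IsStronglyConvex r A) (hr : 0 < r) (hu : ‖u‖ = 1)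
    {s δ : ℝ} (hs : ∀ z ∈ A, inner ℝ u z ≤ s) {x y : E} (hx : x ∈ A) (hy : y ∈ A)
    (hxs : s - δ ≤ inner ℝ u x) (hys : s - δ ≤ inner ℝ u y) : dist x y ^ 2 ≤ 8 * r * δ := by
  have hmid := hA.inner_lineMap_add_le hr.le hu hs hx hy (t := 1 / 2) (by norm_num)
  rw [lineMap_apply_module, inner_add_right, inner_smul_right, inner_smul_right] at hmid
  have hgain : 1 / 2 * (1 - 1 / 2) * dist x y ^ 2 / (2 * r) ≤ δ := by linarith
  rw [div_le_iff₀ (by positivity)] at hgain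
  linarith

lemma exists_isMaxOn_inner [CompleteSpace E] (hA : IsStronglyConvex r A) (hr : 0 < r)
    (hu : ‖u‖ = 1) (hne : A.Nonempty) (hclosed : IsClosed A) (hbdd : IsBounded A) :
    ∃ a ∈ A, IsMaxOn (fun y => inner ℝ u y) A a := by
  set f : E → ℝ := fun y => inner ℝ u y
  have hf : Continuous f := by fun_prop
  have hbddAbove : BddAbove (f '' A) := ((innerSL ℝ u).lipschitz.isBounded_image hbdd).bddAbove
  set s := sSup (f '' A)
  have hs : ∀ z ∈ A, f z ≤ s := fun z hz => le_csSup hbddAbove (mem_image_of_mem f hz)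
  set F : Filter E := comap f (𝓝 s) ⊓ 𝓟 A
  have hFne : NeBot F := by
    rw [neBot_inf_comap_iff_map', map_principal]
    exact mem_closure_iff_clusterPt.1 (csSup_mem_closure (hne.image f) hbddAbove)
  have hF : Cauchy F := by
    refine Metric.cauchy_iff.2 ⟨hFne, fun ε hε => ?_⟩
    obtain ⟨δ, hδ, hδε⟩ : ∃ δ > 0, 8 * r * δ < ε ^ 2 :=
      ⟨ε ^ 2 / (16 * r), by positivity, by field_simp; norm_num⟩
    refine ⟨f ⁻¹' Ioi (s - δ) ∩ A, inter_mem_inf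
      (preimage_mem_comap (Ioi_mem_nhds (sub_lt_self s hδ))) (mem_principal_self A), ?_⟩
    rintro x ⟨hxs, hx⟩ y ⟨hys, hy⟩
    have hxy := hA.dist_sq_le_of_sub_le_inner hr hu hs hx hy (le_of_lt hxs) (le_of_lt hys)
    exact lt_of_pow_lt_pow_left₀ 2 hε.le (hxy.trans_lt hδε)
  obtain ⟨a, ha, hFa⟩ := hclosed.isComplete F hF inf_le_right
  have hfa : f a = s :=
    tendsto_nhds_unique ((hf.tendsto a).mono_left hFa) (tendsto_comap.mono_left inf_le_left)
  exact ⟨a, ha, fun y hy => (hs y hy).trans_eq hfa.symm⟩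

lemma inner_sub_le_of_isMaxOn (hA : IsStronglyConvex r A) (hr : 0 ≤ r) (hu : ‖u‖ = 1) {a y : E}
    (ha : a ∈ A) (hmax : IsMaxOn (fun z => inner ℝ u z) A a) (hy : y ∈ A) :
    inner ℝ u (y - a) ≤ -(dist a y ^ 2 / (2 * r)) := by
  have hgain : ∀ t ∈ Ioc (0 : ℝ) 1,
      inner ℝ u (y - a) ≤ -((1 - t) * (dist a y ^ 2 / (2 * r))) := by
    intro t ht
    have hadd := hA.inner_lineMap_add_le hr hu hmax ha hy (Ioc_subset_Icc_self ht)
    rw [lineMap_apply_module', inner_add_right, inner_smul_right] at hadd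
    refine le_of_mul_le_mul_left ?_ ht.1
    linear_combination hadd
  have hlim : Tendsto (fun t : ℝ => -((1 - t) * (dist a y ^ 2 / (2 * r)))) (𝓝[>] 0)
      (𝓝 (-((1 - 0) * (dist a y ^ 2 / (2 * r))))) :=
    (Continuous.tendsto (by fun_prop) 0).mono_left nhdsWithin_le_nhds
  rw [sub_zero, one_mul] at hlim
  exact ge_of_tendsto hlim (eventually_of_mem (Ioc_mem_nhdsGT one_pos) hgain)

lemma sub_smul_mem_ballDual (hA : IsStronglyConvex r A) (hr : 0 < r) (hu : ‖u‖ = 1) {a : E}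
    (ha : a ∈ A) (hmax : IsMaxOn (fun z => inner ℝ u z) A a) : a - r • u ∈ ballDual r A := by
  refine mem_ballDual.2 fun y hy => ?_
  rw [dist_comm, dist_eq_norm, ← sub_add]
  refine le_of_sq_le_sq ?_ hr.le
  calc ‖y - a + r • u‖ ^ 2 = dist a y ^ 2 + 2 * r * inner ℝ u (y - a) + r ^ 2 := by
        rw [norm_add_sq_real, norm_smul, hu, inner_smul_right, real_inner_comm, mul_one,
          Real.norm_eq_abs, sq_abs, ← dist_eq_norm, dist_comm, mul_assoc]
    _ ≤ dist a y ^ 2 + 2 * r * -(dist a y ^ 2 / (2 * r)) + r ^ 2 := by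
        gcongr
        exact hA.inner_sub_le_of_isMaxOn hr.le hu ha hmax hy
    _ = r ^ 2 := by field_simp; ring

lemma sphere_subset_add_neg_ballDual [CompleteSpace E] (hA : IsStronglyConvex r A) (hr : 0 < r)
    (hne : A.Nonempty) (hclosed : IsClosed A) (hbdd : IsBounded A) :
    sphere 0 r ⊆ A + -ballDual r A := by
  intro p hp
  rw [mem_sphere_zero_iff_norm] at hp
  have hu : ‖r⁻¹ • p‖ = 1 := by
    rw [norm_smul, hp, norm_inv, Real.norm_of_nonneg hr.le, inv_mul_cancel₀ hr.ne']
  obtain ⟨a, ha, hmax⟩ := hA.exists_isMaxOn_inner hr hu hne hclosed hbdd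
  have hb := hA.sub_smul_mem_ballDual hr hu ha hmax
  rw [smul_inv_smul₀ hr.ne'] at hb
  exact ⟨a, ha, -(a - p), neg_mem_neg.2 hb, by simp⟩

theorem add_neg_ballDual {E : Type*} [NormedAddCommGroup E] [InnerProductSpace ℝ E]
    [CompleteSpace E] {r : ℝ} {A : Set E} (hA : IsStronglyConvex r A) (hr : 0 < r)
    (hne : A.Nonempty) (hclosed : IsClosed A) (hbdd : IsBounded A) :
    A + -ballDual r A = closedBall 0 r := by
  refine (add_neg_ballDual_subset_closedBall r A).antisymm ?_
  rcases subsingleton_or_nontrivial E with _ | _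
  · obtain ⟨a, ha⟩ := hne
    have ha' : a ∈ ballDual r A :=
      mem_ballDual.2 fun x _ => by rw [Subsingleton.elim x a, dist_self]; exact hr.le
    exact fun p _ => ⟨a, ha, -a, neg_mem_neg.2 ha', Subsingleton.elim _ _⟩
  · rw [← convexHull_sphere_eq_closedBall 0 hr.le]
    exact convexHull_min (hA.sphere_subset_add_neg_ballDual hr hne hclosed hbdd)
      ((hA.convex hr.le).add ((isStronglyConvex_ballDual hr A).convex hr.le).neg)

end IsStronglyConvex

theorem rBallBody_add_neg_dual_general {E : Type*} [NormedAddCommGroup E] [InnerProductSpace ℝ E]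
    [CompleteSpace E] {r : ℝ} (hr : 0 < r) {X A : Set E} (hX : X.Nonempty)
    (hA : A = ballDual r X) (hAne : A.Nonempty) :
    A + -ballDual r A = closedBall 0 r := by
  subst hA
  exact (isStronglyConvex_ballDual hr X).add_neg_ballDual hr hAne isClosed_ballDual
    (isBounded_ballDual hX)

/-- Proposition 2.5 of [BeNa]: if `A ⊆ ℝ^d` is a nonempty `r`-ball body, then the Minkowski
sum `A + (−A^r)` equals the closed ball of radius `r` centered at the origin. -/
theorem rBallBody_add_neg_dual {d : ℕ} (hd : 1 < d) {r : ℝ} (hr : 0 < r)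
    {X A : Set (EuclideanSpace ℝ (Fin d))} (hX : X.Nonempty) (hA : A = ballBody r X)
    (hAne : A.Nonempty) :
    A + -(ballBody r A) = closedBall (0 : EuclideanSpace ℝ (Fin d)) r :=
  rBallBody_add_neg_dual_general hr hX hA hAne
end
end

section
/- Let d > 1 be an integer and r > 0. Let A ⊂ ℝ^d be a nonempty r-ball body (i.e., A = X^r for some nonempty X ⊆ ℝ^d) with A^r nonempty. Then V_d(A)^{1/d} + V_d(A^r)^{1/d} ≤ V_d(B[o,r])^{1/d}, where o is the origin, and equality holds if and only if A is a closed ball B[p, ρ] for some p ∈ ℝ^d and some 0 ≤ ρ ≤ r. -/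
/-!
If `a ∈ A` and `b ∈ A^r` then `|a - b| ≤ r`, so `A + (-A^r) ⊆ B[o,r]`, and the inequality is
Brunn–Minkowski for the compact convex sets `A` and `-A^r`. A set `A` which is not an `r`-ball body
may be enlarged to `A^{rr}`, which is one and has the same dual `A^r`.

Brunn–Minkowski is proved in the form `|A|ˢ |C|ᵗ ≤ |s A + t C|` by induction on the dimension. The
volumes of parallel slices form a log-concave density on the line, hence a continuous and positive
one on an open interval. Transport the uniform distribution on `(0, 1)` to the two slice densities
by their quantile functions; AM–GM, applied to the speeds of the two transports, bounds the slice
volume of `s A + t C` along the interpolated transport.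

Suppose `|A| = |C|` and equality holds. Then AM–GM is an equality throughout, so the two transports
differ by a constant, which vanishes if `A` and `C` have the same first moment. Consequently the
support functions of `A` and `C` agree in the direction transverse to the slices, which is
arbitrary, and `A = C`. Dropping the normalizations, `C` is homothetic to `A` in the equality case
of `|A|^{1/d} + |C|^{1/d} ≤ |A + C|^{1/d}` for sets of positive volume. If moreover `A + C` is a
ball, then `A`, being convex and homothetic to `A + C`, is a ball too. If one of `A` and `C` is a
null set, then the other fills a ball of the same radius.
-/

open MeasureTheory Metric

noncomputable section

open Set Filter Topology Module
open scoped Pointwise ENNReal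

/-! ### Transport on the line -/

/-- An unnormalized density on the line which is continuous and positive on the interval `(a, b)`
and vanishes off `[a, b]`. Its values at `a` and `b` are not restricted. -/
structure IsIntervalDensity (f : ℝ → ℝ) (a b : ℝ) : Prop where
  lt : a < b
  continuousOn : ContinuousOn f (Ioo a b)
  pos : ∀ x ∈ Ioo a b, 0 < f x
  eq_zero : ∀ x ∉ Icc a b, f x = 0
  integrable : Integrable f

/-- The distribution function of the density `f` relative to the base point `a`, normalized by the
total mass. -/
def massFraction (f : ℝ → ℝ) (a x : ℝ) : ℝ :=
  (∫ u in a..x, f u) / ∫ u, f u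

/-- The quantile function of a density on `(a, b)`, that is, the inverse `(0, 1) → (a, b)` of
`massFraction f a`. Its values off `(0, 1)` are junk. -/
def quantile (f : ℝ → ℝ) (a b : ℝ) : ℝ → ℝ :=
  Function.invFunOn (massFraction f a) (Ioo a b)

namespace IsIntervalDensity

variable {f : ℝ → ℝ} {a b θ : ℝ}

lemma intervalIntegral_eq (hf : IsIntervalDensity f a b) : ∫ x in a..b, f x = ∫ x, f x := by
  rw [intervalIntegral.integral_of_le hf.lt.le, ← integral_Icc_eq_integral_Ioc]
  exact setIntegral_eq_integral_of_forall_compl_eq_zero hf.eq_zero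

lemma integral_pos (hf : IsIntervalDensity f a b) : 0 < ∫ x, f x := by
  rw [← hf.intervalIntegral_eq]
  exact intervalIntegral.intervalIntegral_pos_of_pos_on hf.integrable.intervalIntegrable
    hf.pos hf.lt

lemma continuous_massFraction (hf : IsIntervalDensity f a b) : Continuous (massFraction f a) :=
  (intervalIntegral.continuous_primitive
    (fun _ _ => hf.integrable.intervalIntegrable) a).div_const _

lemma hasDerivAt_massFraction (hf : IsIntervalDensity f a b) {x : ℝ} (hx : x ∈ Ioo a b) :
    HasDerivAt (massFraction f a) (f x / ∫ u, f u) x :=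
  (intervalIntegral.integral_hasDerivAt_right hf.integrable.intervalIntegrable
    hf.integrable.aestronglyMeasurable.stronglyMeasurableAtFilter
    (hf.continuousOn.continuousAt (Ioo_mem_nhds hx.1 hx.2))).div_const _

lemma strictMonoOn_massFraction (hf : IsIntervalDensity f a b) :
    StrictMonoOn (massFraction f a) (Icc a b) := by
  refine strictMonoOn_of_deriv_pos (convex_Icc a b) hf.continuous_massFraction.continuousOn
    fun x hx => ?_
  rw [interior_Icc] at hx
  rw [(hf.hasDerivAt_massFraction hx).deriv]
  exact div_pos (hf.pos x hx) hf.integral_pos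

lemma bijOn_massFraction (hf : IsIntervalDensity f a b) :
    BijOn (massFraction f a) (Ioo a b) (Ioo 0 1) := by
  have h_left : massFraction f a a = 0 := by simp [massFraction]
  have h_right : massFraction f a b = 1 := by
    rw [massFraction, hf.intervalIntegral_eq, div_self hf.integral_pos.ne']
  rw [← h_left, ← h_right]
  refine ⟨fun x hx => ⟨?_, ?_⟩, hf.strictMonoOn_massFraction.injOn.mono Ioo_subset_Icc_self,
    intermediate_value_Ioo hf.lt.le hf.continuous_massFraction.continuousOn⟩
  · exact hf.strictMonoOn_massFraction (left_mem_Icc.2 hf.lt.le) (Ioo_subset_Icc_self hx) hx.1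
  · exact hf.strictMonoOn_massFraction (Ioo_subset_Icc_self hx) (right_mem_Icc.2 hf.lt.le) hx.2

lemma bijOn_quantile (hf : IsIntervalDensity f a b) :
    BijOn (quantile f a b) (Ioo 0 1) (Ioo a b) :=
  hf.bijOn_massFraction.symm hf.bijOn_massFraction.invOn_invFunOn.symm

lemma massFraction_quantile (hf : IsIntervalDensity f a b) (hθ : θ ∈ Ioo (0 : ℝ) 1) :
    massFraction f a (quantile f a b θ) = θ :=
  hf.bijOn_massFraction.invOn_invFunOn.2 hθ

lemma strictMonoOn_quantile (hf : IsIntervalDensity f a b) :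
    StrictMonoOn (quantile f a b) (Ioo 0 1) := by
  intro θ hθ η hη hθη
  rw [← (hf.strictMonoOn_massFraction.mono Ioo_subset_Icc_self).lt_iff_lt
    (hf.bijOn_quantile.mapsTo hθ) (hf.bijOn_quantile.mapsTo hη)]
  rwa [hf.massFraction_quantile hθ, hf.massFraction_quantile hη]

lemma hasDerivAt_quantile (hf : IsIntervalDensity f a b) (hθ : θ ∈ Ioo (0 : ℝ) 1) :
    HasDerivAt (quantile f a b) ((∫ x, f x) / f (quantile f a b θ)) θ := by
  have hz : quantile f a b θ ∈ Ioo a b := hf.bijOn_quantile.mapsTo hθ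
  have h_cont : ContinuousAt (quantile f a b) θ :=
    hf.strictMonoOn_quantile.continuousAt_of_image_mem_nhds (Ioo_mem_nhds hθ.1 hθ.2)
      (by rw [hf.bijOn_quantile.image_eq]; exact Ioo_mem_nhds hz.1 hz.2)
  rw [← inv_div]
  refine (hf.hasDerivAt_massFraction hz).of_local_left_inverse h_cont
    (div_pos (hf.pos _ hz) hf.integral_pos).ne' ?_
  filter_upwards [Ioo_mem_nhds hθ.1 hθ.2] with η hη using hf.massFraction_quantile hη

lemma continuousOn_quantile (hf : IsIntervalDensity f a b) :
    ContinuousOn (quantile f a b) (Ioo 0 1) :=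
  fun _ hθ => (hf.hasDerivAt_quantile hθ).continuousAt.continuousWithinAt

lemma integrableOn_quantile (hf : IsIntervalDensity f a b) :
    IntegrableOn (quantile f a b) (Ioo 0 1) := by
  refine Integrable.of_bound (hf.continuousOn_quantile.aestronglyMeasurable measurableSet_Ioo)
    (max |a| |b|) ?_
  filter_upwards [ae_restrict_mem measurableSet_Ioo] with θ hθ
  have hz := hf.bijOn_quantile.mapsTo hθ
  exact abs_le_max_abs_abs hz.1.le hz.2.le

lemma pos_quantile (hf : IsIntervalDensity f a b) (hθ : θ ∈ Ioo (0 : ℝ) 1) :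
    0 < f (quantile f a b θ) :=
  hf.pos _ (hf.bijOn_quantile.mapsTo hθ)

lemma continuousOn_comp_quantile (hf : IsIntervalDensity f a b) :
    ContinuousOn (fun θ => f (quantile f a b θ)) (Ioo 0 1) :=
  hf.continuousOn.comp hf.continuousOn_quantile hf.bijOn_quantile.mapsTo

lemma integral_mul_id (hf : IsIntervalDensity f a b) :
    ∫ x, f x * x = (∫ x, f x) * ∫ θ in Ioo (0 : ℝ) 1, quantile f a b θ := by
  have h_interval : ∫ x, f x * x = ∫ x in Ioo a b, f x * x := by
    rw [← integral_Icc_eq_integral_Ioo]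
    refine (setIntegral_eq_integral_of_forall_compl_eq_zero fun x hx => ?_).symm
    rw [hf.eq_zero x hx, zero_mul]
  rw [h_interval, ← hf.bijOn_quantile.image_eq, ← integral_const_mul,
    integral_image_eq_integral_abs_deriv_smul measurableSet_Ioo
      (fun θ hθ => (hf.hasDerivAt_quantile hθ).hasDerivWithinAt) hf.bijOn_quantile.injOn]
  refine setIntegral_congr_fun measurableSet_Ioo fun θ hθ => ?_
  have hfθ := hf.pos_quantile hθ
  simp only [smul_eq_mul, abs_of_pos (div_pos hf.integral_pos hfθ)]
  field_simp

end IsIntervalDensity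

lemma geom_mean_le_jacobian_mul_geom_mean {I J p q s t : ℝ} (hI : 0 < I) (hJ : 0 < J)
    (hp : 0 < p) (hq : 0 < q) (hs : 0 < s) (ht : 0 < t) (hst : s + t = 1) :
    I ^ s * J ^ t ≤ (s * (I / p) + t * (J / q)) * (p ^ s * q ^ t) := by
  have h_amgm := Real.geom_mean_le_arith_mean2_weighted hs.le ht.le (div_pos hI hp).le
    (div_pos hJ hq).le hst
  rw [Real.div_rpow hI.le hp.le, Real.div_rpow hJ.le hq.le, div_mul_div_comm,
    div_le_iff₀ (by positivity)] at h_amgm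
  exact h_amgm

lemma eq_of_jacobian_mul_geom_mean_eq {I p q s t : ℝ} (hI : 0 < I) (hp : 0 < p) (hq : 0 < q)
    (hs : 0 < s) (ht : 0 < t) (hst : s + t = 1)
    (h : (s * (I / p) + t * (I / q)) * (p ^ s * q ^ t) = I) : p = q := by
  have h_amgm : ∏ i, ![I / p, I / q] i ^ ![s, t] i = ∑ i, ![s, t] i * ![I / p, I / q] i := by
    simp only [Fin.prod_univ_two, Fin.sum_univ_two, Matrix.cons_val_zero, Matrix.cons_val_one,
      Real.div_rpow hI.le hp.le, Real.div_rpow hI.le hq.le, div_mul_div_comm]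
    rw [← Real.rpow_add hI, hst, Real.rpow_one, div_eq_iff (by positivity), h]
  rw [Real.geom_mean_eq_arith_mean_weighted_iff_of_pos _ _ _ (by simp [Fin.forall_fin_two, hs, ht])
    (by simp [hst]) (by simp [Fin.forall_fin_two, hI, hp, hq, le_of_lt])] at h_amgm
  simpa [div_eq_mul_inv, hI.ne'] using h_amgm 0 (by simp) 1 (by simp)

/-- The integrand of the Prékopa–Leindler transport: the speed of the interpolated quantile
function `s z + t w`, where `z' = (∫ f) / f ∘ z` and `w' = (∫ g) / g ∘ w`, times the weighted
geometric mean of the densities along it. -/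
def transportIntegrand (f g z w : ℝ → ℝ) (s t θ : ℝ) : ℝ :=
  (s * ((∫ x, f x) / f (z θ)) + t * ((∫ x, g x) / g (w θ))) * (f (z θ) ^ s * g (w θ) ^ t)

section PrekopaLeindler

variable {f g : ℝ → ℝ} {h : ℝ → ℝ≥0∞} {a b a' b' s t : ℝ}

lemma lintegral_transportIntegrand_le (hf : IsIntervalDensity f a b)
    (hg : IsIntervalDensity g a' b') (hs : 0 < s) (ht : 0 < t)
    (hh : ∀ x y, ENNReal.ofReal (f x ^ s * g y ^ t) ≤ h (s * x + t * y)) :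
    ∫⁻ θ in Ioo (0 : ℝ) 1,
      ENNReal.ofReal (transportIntegrand f g (quantile f a b) (quantile g a' b') s t θ) ≤
        ∫⁻ x, h x := by
  set z : ℝ → ℝ := fun θ => s * quantile f a b θ + t * quantile g a' b' θ
  set z' : ℝ → ℝ := fun θ =>
    s * ((∫ x, f x) / f (quantile f a b θ)) + t * ((∫ x, g x) / g (quantile g a' b' θ))
  have hz_mono : StrictMonoOn z (Ioo 0 1) := fun θ hθ η hη hθη =>
    add_lt_add (mul_lt_mul_of_pos_left (hf.strictMonoOn_quantile hθ hη hθη) hs)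
      (mul_lt_mul_of_pos_left (hg.strictMonoOn_quantile hθ hη hθη) ht)
  have hz_deriv : ∀ θ ∈ Ioo (0 : ℝ) 1, HasDerivWithinAt z (z' θ) (Ioo 0 1) θ := fun θ hθ =>
    (((hf.hasDerivAt_quantile hθ).const_mul s).add
      ((hg.hasDerivAt_quantile hθ).const_mul t)).hasDerivWithinAt
  calc _ ≤ ∫⁻ θ in Ioo (0 : ℝ) 1, ENNReal.ofReal |z' θ| * h (z θ) := by
        refine setLIntegral_mono' measurableSet_Ioo fun θ hθ => ?_
        have hz'_pos : 0 < z' θ :=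
          add_pos (mul_pos hs (div_pos hf.integral_pos (hf.pos_quantile hθ)))
            (mul_pos ht (div_pos hg.integral_pos (hg.pos_quantile hθ)))
        rw [transportIntegrand, abs_of_pos hz'_pos, ENNReal.ofReal_mul hz'_pos.le]
        gcongr
        exact hh _ _
    _ = ∫⁻ x in z '' Ioo 0 1, h x :=
        (lintegral_image_eq_lintegral_abs_deriv_mul measurableSet_Ioo hz_deriv hz_mono.injOn h).symm
    _ ≤ ∫⁻ x, h x := setLIntegral_le_lintegral _ _

lemma geom_mean_integral_le_transportIntegrand (hf : IsIntervalDensity f a b)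
    (hg : IsIntervalDensity g a' b') (hs : 0 < s) (ht : 0 < t) (hst : s + t = 1) {θ : ℝ}
    (hθ : θ ∈ Ioo (0 : ℝ) 1) :
    (∫ x, f x) ^ s * (∫ x, g x) ^ t ≤
      transportIntegrand f g (quantile f a b) (quantile g a' b') s t θ :=
  geom_mean_le_jacobian_mul_geom_mean hf.integral_pos hg.integral_pos (hf.pos_quantile hθ)
    (hg.pos_quantile hθ) hs ht hst

lemma continuousOn_transportIntegrand (hf : IsIntervalDensity f a b)
    (hg : IsIntervalDensity g a' b') :
    ContinuousOn (transportIntegrand f g (quantile f a b) (quantile g a' b') s t) (Ioo 0 1) := by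
  have hf_ne : ∀ θ ∈ Ioo (0 : ℝ) 1, f (quantile f a b θ) ≠ 0 := fun θ hθ => (hf.pos_quantile hθ).ne'
  have hg_ne : ∀ θ ∈ Ioo (0 : ℝ) 1, g (quantile g a' b' θ) ≠ 0 := fun θ hθ =>
    (hg.pos_quantile hθ).ne'
  have hf_cont := hf.continuousOn_comp_quantile
  have hg_cont := hg.continuousOn_comp_quantile
  exact ((continuousOn_const.mul (continuousOn_const.div hf_cont hf_ne)).add
    (continuousOn_const.mul (continuousOn_const.div hg_cont hg_ne))).mul
    ((hf_cont.rpow_const fun θ hθ => Or.inl (hf_ne θ hθ)).mul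
      (hg_cont.rpow_const fun θ hθ => Or.inl (hg_ne θ hθ)))

theorem prekopa_leindler (hf : IsIntervalDensity f a b) (hg : IsIntervalDensity g a' b')
    (hs : 0 < s) (ht : 0 < t) (hst : s + t = 1)
    (hh : ∀ x y, ENNReal.ofReal (f x ^ s * g y ^ t) ≤ h (s * x + t * y)) :
    ENNReal.ofReal ((∫ x, f x) ^ s * (∫ x, g x) ^ t) ≤ ∫⁻ x, h x :=
  calc ENNReal.ofReal ((∫ x, f x) ^ s * (∫ x, g x) ^ t)
      = ∫⁻ _ in Ioo (0 : ℝ) 1, ENNReal.ofReal ((∫ x, f x) ^ s * (∫ x, g x) ^ t) := by simp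
    _ ≤ ∫⁻ θ in Ioo (0 : ℝ) 1,
          ENNReal.ofReal (transportIntegrand f g (quantile f a b) (quantile g a' b') s t θ) :=
        setLIntegral_mono' measurableSet_Ioo fun _ hθ =>
          ENNReal.ofReal_le_ofReal (geom_mean_integral_le_transportIntegrand hf hg hs ht hst hθ)
    _ ≤ ∫⁻ x, h x := lintegral_transportIntegrand_le hf hg hs ht hh

lemma transportIntegrand_eq_integral (hf : IsIntervalDensity f a b)
    (hg : IsIntervalDensity g a' b') (hs : 0 < s) (ht : 0 < t) (hst : s + t = 1)
    (hfg : ∫ x, f x = ∫ x, g x)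
    (hh : ∀ x y, ENNReal.ofReal (f x ^ s * g y ^ t) ≤ h (s * x + t * y))
    (hle : ∫⁻ x, h x ≤ ENNReal.ofReal (∫ x, f x)) {θ : ℝ} (hθ : θ ∈ Ioo (0 : ℝ) 1) :
    transportIntegrand f g (quantile f a b) (quantile g a' b') s t θ = ∫ x, f x := by
  set Φ := transportIntegrand f g (quantile f a b) (quantile g a' b') s t
  have hΦ_cont : ContinuousOn Φ (Ioo 0 1) := continuousOn_transportIntegrand hf hg
  have hΦ_ge : ∀ η ∈ Ioo (0 : ℝ) 1, ∫ x, f x ≤ Φ η := by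
    intro η hη
    have h_le := geom_mean_integral_le_transportIntegrand hf hg hs ht hst hη
    rwa [← hfg, ← Real.rpow_add hf.integral_pos, hst, Real.rpow_one] at h_le
  have h_ae : (fun _ : ℝ => ENNReal.ofReal (∫ x, f x)) =ᵐ[volume.restrict (Ioo 0 1)]
      fun η => ENNReal.ofReal (Φ η) := by
    refine ae_eq_of_ae_le_of_lintegral_le ?_ (by simp)
      (hΦ_cont.aemeasurable measurableSet_Ioo).ennreal_ofReal
      (((lintegral_transportIntegrand_le hf hg hs ht hh).trans hle).trans (by simp))
    filter_upwards [ae_restrict_mem measurableSet_Ioo] with η hη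
    exact ENNReal.ofReal_le_ofReal (hΦ_ge η hη)
  have h_eq := Measure.eqOn_open_of_ae_eq h_ae isOpen_Ioo continuousOn_const
    (ENNReal.continuous_ofReal.comp_continuousOn hΦ_cont) hθ
  exact ((ENNReal.ofReal_eq_ofReal_iff hf.integral_pos.le
    (hf.integral_pos.le.trans (hΦ_ge θ hθ))).1 h_eq).symm

lemma exists_quantile_sub_quantile_eq (hf : IsIntervalDensity f a b)
    (hg : IsIntervalDensity g a' b') (hs : 0 < s) (ht : 0 < t) (hst : s + t = 1)
    (hfg : ∫ x, f x = ∫ x, g x)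
    (hh : ∀ x y, ENNReal.ofReal (f x ^ s * g y ^ t) ≤ h (s * x + t * y))
    (hle : ∫⁻ x, h x ≤ ENNReal.ofReal (∫ x, f x)) :
    ∃ c, ∀ θ ∈ Ioo (0 : ℝ) 1, quantile f a b θ - quantile g a' b' θ = c := by
  have h_height : ∀ θ ∈ Ioo (0 : ℝ) 1, f (quantile f a b θ) = g (quantile g a' b' θ) := by
    intro θ hθ
    have h_eq := transportIntegrand_eq_integral hf hg hs ht hst hfg hh hle hθ
    rw [transportIntegrand, ← hfg] at h_eq
    exact eq_of_jacobian_mul_geom_mean_eq hf.integral_pos (hf.pos_quantile hθ)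
      (hg.pos_quantile hθ) hs ht hst h_eq
  have h_deriv : ∀ θ ∈ Ioo (0 : ℝ) 1,
      HasDerivAt (fun θ => quantile f a b θ - quantile g a' b' θ) 0 θ := by
    intro θ hθ
    have h_sub := (hf.hasDerivAt_quantile hθ).sub (hg.hasDerivAt_quantile hθ)
    rwa [← hfg, h_height θ hθ, sub_self] at h_sub
  exact isOpen_Ioo.exists_is_const_of_deriv_eq_zero isPreconnected_Ioo
    (fun θ hθ => (h_deriv θ hθ).differentiableAt.differentiableWithinAt)
    fun θ hθ => (h_deriv θ hθ).deriv

lemma right_eq_of_prekopa_leindler_eq (hf : IsIntervalDensity f a b)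
    (hg : IsIntervalDensity g a' b') (hs : 0 < s) (ht : 0 < t) (hst : s + t = 1)
    (hfg : ∫ x, f x = ∫ x, g x) (h_moment : ∫ x, f x * x = ∫ x, g x * x)
    (hh : ∀ x y, ENNReal.ofReal (f x ^ s * g y ^ t) ≤ h (s * x + t * y))
    (hle : ∫⁻ x, h x ≤ ENNReal.ofReal (∫ x, f x)) : b = b' := by
  obtain ⟨c, hc⟩ := exists_quantile_sub_quantile_eq hf hg hs ht hst hfg hh hle
  have hc_zero : c = 0 := by
    rw [hf.integral_mul_id, hg.integral_mul_id, ← hfg] at h_moment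
    calc c = ∫ θ in Ioo (0 : ℝ) 1, (quantile f a b θ - quantile g a' b' θ) := by
          rw [setIntegral_congr_fun measurableSet_Ioo hc]
          simp
      _ = 0 := by
          rw [integral_sub hf.integrableOn_quantile hg.integrableOn_quantile,
            mul_left_cancel₀ hf.integral_pos.ne' h_moment, sub_self]
  have h_image : Ioo a b = Ioo a' b' := by
    rw [← hf.bijOn_quantile.image_eq, ← hg.bijOn_quantile.image_eq]
    exact image_congr fun θ hθ => sub_eq_zero.1 ((hc θ hθ).trans hc_zero)
  rw [← csSup_Ioo hf.lt, h_image, csSup_Ioo hg.lt]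

end PrekopaLeindler

/-! ### Slices -/

/-- The slice of a subset of `ℝⁿ⁺¹` at height `s` of the zeroth coordinate, as a subset of `ℝⁿ`. -/
def slice {n : ℕ} (A : Set (Fin (n + 1) → ℝ)) (s : ℝ) : Set (Fin n → ℝ) :=
  Fin.cons (α := fun _ => ℝ) s ⁻¹' A

/-- The volume of the slices of a set as a function of the height: the marginal density of the set
along the zeroth coordinate. -/
def sliceVolume {n : ℕ} (A : Set (Fin (n + 1) → ℝ)) (s : ℝ) : ℝ :=
  volume.real (slice A s)

section Slice

variable {n : ℕ} {A : Set (Fin (n + 1) → ℝ)}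

lemma smul_cons_add_smul_cons (s t x y : ℝ) (u v : Fin n → ℝ) :
    s • (Fin.cons x u : Fin (n + 1) → ℝ) + t • (Fin.cons y v : Fin (n + 1) → ℝ) =
      Fin.cons (s * x + t * y) (s • u + t • v) := by
  ext i
  refine Fin.cases ?_ (fun j => ?_) i <;> simp

lemma smul_slice_add_smul_slice_subset (A C : Set (Fin (n + 1) → ℝ)) (s t x y : ℝ) :
    s • slice A x + t • slice C y ⊆ slice (s • A + t • C) (s * x + t * y) := by
  rintro _ ⟨_, ⟨u, hu, rfl⟩, _, ⟨v, hv, rfl⟩, rfl⟩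
  rw [slice, mem_preimage, ← smul_cons_add_smul_cons]
  exact add_mem_add (smul_mem_smul_set hu) (smul_mem_smul_set hv)

lemma convex_slice (hA : Convex ℝ A) (s : ℝ) : Convex ℝ (slice A s) := by
  intro u hu v hv p q hp hq hpq
  rw [slice, mem_preimage] at hu hv ⊢
  have h_mem := hA hu hv hp hq hpq
  rwa [smul_cons_add_smul_cons, ← add_mul, hpq, one_mul] at h_mem

lemma isCompact_slice (hA : IsCompact A) (s : ℝ) : IsCompact (slice A s) := by
  have h_cons : Continuous (Fin.cons (α := fun _ : Fin (n + 1) => ℝ) s) := by fun_prop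
  have h_tail : Continuous (Fin.tail : (Fin (n + 1) → ℝ) → Fin n → ℝ) := by
    unfold Fin.tail
    fun_prop
  exact (hA.image h_tail).of_isClosed_subset (hA.isClosed.preimage h_cons)
    fun y hy => ⟨Fin.cons s y, hy, Fin.tail_cons (α := fun _ => ℝ) s y⟩

lemma slice_eq_preimage (A : Set (Fin (n + 1) → ℝ)) (s : ℝ) :
    slice A s =
      Prod.mk s ⁻¹' ((MeasurableEquiv.piFinSuccAbove (fun _ => ℝ) 0).symm ⁻¹' A) := by
  ext y
  simp [slice, MeasurableEquiv.piFinSuccAbove, Fin.insertNthEquiv]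

lemma volume_slice_inter_preimage (A : Set (Fin (n + 1) → ℝ)) (B : Set ℝ) (s : ℝ) :
    volume (slice (A ∩ Function.eval 0 ⁻¹' B) s) =
      B.indicator (fun s => volume (slice A s)) s := by
  by_cases hs : s ∈ B <;> simp [slice, preimage_inter, preimage_preimage, hs]

lemma measurable_volume_slice (hA : MeasurableSet A) :
    Measurable fun s => volume (slice A s) := by
  simp only [slice_eq_preimage]
  exact measurable_measure_prodMk_left ((MeasurableEquiv.measurable _) hA)

lemma lintegral_volume_slice (hA : MeasurableSet A) :
    ∫⁻ s, volume (slice A s) = volume A := by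
  have h_preserving := (volume_preserving_piFinSuccAbove (fun _ : Fin (n + 1) => ℝ) 0).symm
  rw [← h_preserving.measure_preimage hA.nullMeasurableSet]
  simp only [slice_eq_preimage]
  exact (Measure.prod_apply (h_preserving.measurable hA)).symm

lemma map_eval_zero_restrict (hA : MeasurableSet A) :
    (volume.restrict A).map (Function.eval 0) = volume.withDensity fun s => volume (slice A s) := by
  ext B hB
  have h_meas : MeasurableSet (Function.eval 0 ⁻¹' B : Set (Fin (n + 1) → ℝ)) :=
    measurable_pi_apply 0 hB
  rw [Measure.map_apply (measurable_pi_apply 0) hB, Measure.restrict_apply h_meas, inter_comm,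
    ← lintegral_volume_slice (hA.inter h_meas), withDensity_apply _ hB, ← lintegral_indicator hB]
  exact lintegral_congr (volume_slice_inter_preimage A B)

lemma integrable_sliceVolume (hA : IsCompact A) : Integrable (sliceVolume A) :=
  integrable_toReal_of_lintegral_ne_top (measurable_volume_slice hA.measurableSet).aemeasurable
    (by simpa only [lintegral_volume_slice hA.measurableSet] using hA.measure_lt_top.ne)

lemma integral_sliceVolume (hA : IsCompact A) : ∫ s, sliceVolume A s = volume.real A := by
  rw [measureReal_def, ← lintegral_volume_slice hA.measurableSet]
  exact integral_toReal (measurable_volume_slice hA.measurableSet).aemeasurable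
    (.of_forall fun s => (isCompact_slice hA s).measure_lt_top)

lemma integral_sliceVolume_mul_id (hA : IsCompact A) :
    ∫ s, sliceVolume A s * s = ∫ x in A, x 0 :=
  calc ∫ s, sliceVolume A s * s
      = ∫ s, s ∂volume.withDensity fun s => volume (slice A s) :=
        (integral_withDensity_eq_integral_toReal_smul (measurable_volume_slice hA.measurableSet)
          (.of_forall fun s => (isCompact_slice hA s).measure_lt_top) _).symm
    _ = ∫ x in A, x 0 := by
        rw [← map_eval_zero_restrict hA.measurableSet]
        exact integral_map (measurable_pi_apply 0).aemeasurable
          aestronglyMeasurable_id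

end Slice

/-! ### Brunn–Minkowski by induction on the dimension -/

/-- The Brunn–Minkowski inequality `|A|ˢ |C|ᵗ ≤ |s A + t C|`, where `s + t = 1`, for compact convex
sets in `ℝⁿ`: the dimension-free form, which passes from slices to bodies. -/
def MultiplicativeBrunnMinkowski (n : ℕ) : Prop :=
  ∀ ⦃A C : Set (Fin n → ℝ)⦄ ⦃s t : ℝ⦄, IsCompact A → IsCompact C → Convex ℝ A → Convex ℝ C →
    0 < s → 0 < t → s + t = 1 → volume A ^ s * volume C ^ t ≤ volume (s • A + t • C)

lemma ofReal_geom_mean_measureReal {α : Type*} [MeasurableSpace α] {μ : Measure α} {A C : Set α}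
    {s t : ℝ} (hA : μ A ≠ ∞) (hC : μ C ≠ ∞) (hs : 0 ≤ s) (ht : 0 ≤ t) :
    ENNReal.ofReal (μ.real A ^ s * μ.real C ^ t) = μ A ^ s * μ C ^ t := by
  rw [ENNReal.ofReal_mul (by positivity), ← ENNReal.ofReal_rpow_of_nonneg measureReal_nonneg hs,
    ← ENNReal.ofReal_rpow_of_nonneg measureReal_nonneg ht, ofReal_measureReal hA,
    ofReal_measureReal hC]

section BodyDensity

variable {n : ℕ} {A C : Set (Fin (n + 1) → ℝ)} {s t : ℝ}

lemma MultiplicativeBrunnMinkowski.sliceVolume_le (hn : MultiplicativeBrunnMinkowski n)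
    (hA : IsCompact A) (hC : IsCompact C) (hAc : Convex ℝ A) (hCc : Convex ℝ C)
    (hs : 0 < s) (ht : 0 < t) (hst : s + t = 1) (x y : ℝ) :
    ENNReal.ofReal (sliceVolume A x ^ s * sliceVolume C y ^ t) ≤
      volume (slice (s • A + t • C) (s * x + t * y)) := by
  have hAx := isCompact_slice hA x
  have hCy := isCompact_slice hC y
  calc ENNReal.ofReal (sliceVolume A x ^ s * sliceVolume C y ^ t)
      = volume (slice A x) ^ s * volume (slice C y) ^ t :=
        ofReal_geom_mean_measureReal hAx.measure_lt_top.ne hCy.measure_lt_top.ne hs.le ht.le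
    _ ≤ volume (s • slice A x + t • slice C y) :=
        hn hAx hCy (convex_slice hAc x) (convex_slice hCc y) hs ht hst
    _ ≤ _ := measure_mono (smul_slice_add_smul_slice_subset A C s t x y)

lemma MultiplicativeBrunnMinkowski.sliceVolume_logConcave (hn : MultiplicativeBrunnMinkowski n)
    (hA : IsCompact A) (hAc : Convex ℝ A) (hs : 0 < s) (ht : 0 < t) (hst : s + t = 1) (x y : ℝ) :
    sliceVolume A x ^ s * sliceVolume A y ^ t ≤ sliceVolume A (s * x + t * y) := by
  have h_slice := hn.sliceVolume_le hA hA hAc hAc hs ht hst x y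
  rw [← hAc.add_smul hs.le ht.le, hst, one_smul] at h_slice
  exact (ENNReal.ofReal_le_iff_le_toReal (isCompact_slice hA _).measure_lt_top.ne).1 h_slice

lemma nonempty_interior_of_volume_ne_zero {E : Type*} [NormedAddCommGroup E] [NormedSpace ℝ E]
    [FiniteDimensional ℝ E] [MeasurableSpace E] [BorelSpace E] {μ : Measure E} [μ.IsAddHaarMeasure]
    {A : Set E} (hA : Convex ℝ A) (h0 : μ A ≠ 0) : (interior A).Nonempty := by
  by_contra h_empty
  rw [not_nonempty_iff_eq_empty] at h_empty
  refine h0 (measure_mono_null ?_ (hA.addHaar_frontier μ))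
  rw [frontier, h_empty, sdiff_empty]
  exact subset_closure

lemma Ioo_subset_image_interior {E : Type*} [NormedAddCommGroup E] [NormedSpace ℝ E] {A : Set E}
    (hA : IsCompact A) (hAc : Convex ℝ A) (hint : (interior A).Nonempty) {φ : E → ℝ}
    (hφ : Continuous φ) : Ioo (sInf (φ '' A)) (sSup (φ '' A)) ⊆ φ '' interior A := by
  have h_closure : closure (interior A) = A := by
    rw [hAc.closure_interior_eq_closure_of_nonempty_interior hint, hA.isClosed.closure_eq]
  have h_image : φ '' A ⊆ closure (φ '' interior A) := by
    nth_rw 1 [← h_closure]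
    exact image_closure_subset_closure_image hφ
  have h_ne : (φ '' A).Nonempty := (hint.mono interior_subset).image φ
  rintro s ⟨hs_inf, hs_sup⟩
  obtain ⟨u, hu, hus⟩ := exists_lt_of_csInf_lt h_ne hs_inf
  obtain ⟨v, hv, hsv⟩ := exists_lt_of_lt_csSup h_ne hs_sup
  obtain ⟨u', hu's, hu'⟩ := mem_closure_iff.1 (h_image hu) (Iio s) isOpen_Iio hus
  obtain ⟨v', hsv', hv'⟩ := mem_closure_iff.1 (h_image hv) (Ioi s) isOpen_Ioi hsv
  exact (hAc.interior.isPreconnected.image φ hφ.continuousOn).ordConnected.out hu' hv'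
    ⟨hu's.le, hsv'.le⟩

lemma sInf_lt_sSup_image_eval_zero (hA : IsCompact A) (hint : (interior A).Nonempty) :
    sInf (Function.eval 0 '' A) < sSup (Function.eval 0 '' A) := by
  obtain ⟨x, hx⟩ := hint
  have h_image := hA.image (continuous_apply (A := fun _ : Fin (n + 1) => ℝ) 0)
  have h_nhds : Function.eval 0 '' A ∈ 𝓝 (x 0) :=
    (isOpenMap_eval 0).image_mem_nhds (mem_interior_iff_mem_nhds.1 hx)
  have h_Icc := mem_of_superset h_nhds
    (subset_Icc_csInf_csSup h_image.bddBelow h_image.bddAbove)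
  exact (Icc_mem_nhds_iff.1 h_Icc).1.trans (Icc_mem_nhds_iff.1 h_Icc).2

lemma sliceVolume_pos (hA : IsCompact A) {x : Fin (n + 1) → ℝ} (hx : x ∈ interior A) :
    0 < sliceVolume A (x 0) := by
  have h_open : IsOpen (slice (interior A) (x 0)) :=
    isOpen_interior.preimage (by fun_prop)
  have h_mem : Fin.tail x ∈ slice (interior A) (x 0) := by
    rwa [slice, mem_preimage, Fin.cons_self_tail]
  exact ENNReal.toReal_pos ((h_open.measure_pos volume ⟨_, h_mem⟩).trans_le
    (measure_mono (preimage_mono interior_subset))).ne' (isCompact_slice hA _).measure_lt_top.ne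

lemma sliceVolume_eq_zero (hA : IsCompact A)
    (hs : s ∉ Icc (sInf (Function.eval 0 '' A)) (sSup (Function.eval 0 '' A))) :
    sliceVolume A s = 0 := by
  have h_empty : slice A s = ∅ := by
    refine eq_empty_of_forall_notMem fun y hy => hs ?_
    have h_image := hA.image (continuous_apply (A := fun _ : Fin (n + 1) => ℝ) 0)
    exact subset_Icc_csInf_csSup h_image.bddBelow h_image.bddAbove ⟨_, hy, Fin.cons_zero _ _⟩
  rw [sliceVolume, h_empty, measureReal_empty]

lemma continuousOn_of_logConcave {f : ℝ → ℝ} {a b : ℝ} (hpos : ∀ x ∈ Ioo a b, 0 < f x)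
    (hf : ∀ ⦃s t : ℝ⦄, 0 < s → 0 < t → s + t = 1 → ∀ x y, f x ^ s * f y ^ t ≤ f (s * x + t * y)) :
    ContinuousOn f (Ioo a b) := by
  have h_log : ConcaveOn ℝ (Ioo a b) fun x => Real.log (f x) := by
    refine concaveOn_iff_forall_pos.2 ⟨convex_Ioo _ _, fun x hx y hy s t hs ht hst => ?_⟩
    have hx_pos := hpos x hx
    have hy_pos := hpos y hy
    calc s • Real.log (f x) + t • Real.log (f y) = Real.log (f x ^ s * f y ^ t) := by
          rw [Real.log_mul (by positivity) (by positivity), Real.log_rpow hx_pos,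
            Real.log_rpow hy_pos, smul_eq_mul, smul_eq_mul]
      _ ≤ Real.log (f (s • x + t • y)) := Real.log_le_log (by positivity) (hf hs ht hst x y)
  exact (h_log.continuousOn isOpen_Ioo).rexp.congr fun x hx => (Real.exp_log (hpos x hx)).symm

lemma MultiplicativeBrunnMinkowski.isIntervalDensity_sliceVolume
    (hn : MultiplicativeBrunnMinkowski n) (hA : IsCompact A) (hAc : Convex ℝ A)
    (h0 : volume A ≠ 0) :
    IsIntervalDensity (sliceVolume A) (sInf (Function.eval 0 '' A))
      (sSup (Function.eval 0 '' A)) := by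
  have h_int := nonempty_interior_of_volume_ne_zero hAc h0
  have h_pos : ∀ s ∈ Ioo (sInf (Function.eval 0 '' A)) (sSup (Function.eval 0 '' A)),
      0 < sliceVolume A s := by
    intro s hs
    obtain ⟨x, hx, rfl⟩ := Ioo_subset_image_interior hA hAc h_int (continuous_apply 0) hs
    exact sliceVolume_pos hA hx
  exact
    { lt := sInf_lt_sSup_image_eval_zero hA h_int
      continuousOn := continuousOn_of_logConcave h_pos fun _ _ hs ht hst =>
        hn.sliceVolume_logConcave hA hAc hs ht hst
      pos := h_pos
      eq_zero := fun _ hs => sliceVolume_eq_zero hA hs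
      integrable := integrable_sliceVolume hA }

lemma multiplicativeBrunnMinkowski_zero : MultiplicativeBrunnMinkowski 0 := by
  intro A C s t _ _ _ _ hs ht _
  rcases A.eq_empty_or_nonempty with rfl | hA
  · simp [ENNReal.zero_rpow_of_pos hs]
  rcases C.eq_empty_or_nonempty with rfl | hC
  · simp [ENNReal.zero_rpow_of_pos ht]
  rw [Subsingleton.eq_univ_of_nonempty hA, Subsingleton.eq_univ_of_nonempty hC,
    Subsingleton.eq_univ_of_nonempty (univ_nonempty.smul_set.add univ_nonempty.smul_set)]
  simp [volume_pi]

lemma MultiplicativeBrunnMinkowski.succ (hn : MultiplicativeBrunnMinkowski n) :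
    MultiplicativeBrunnMinkowski (n + 1) := by
  intro A C s t hA hC hAc hCc hs ht hst
  by_cases hA0 : volume A = 0
  · simp [hA0, ENNReal.zero_rpow_of_pos hs]
  by_cases hC0 : volume C = 0
  · simp [hC0, ENNReal.zero_rpow_of_pos ht]
  calc volume A ^ s * volume C ^ t
      = ENNReal.ofReal ((∫ x, sliceVolume A x) ^ s * (∫ x, sliceVolume C x) ^ t) := by
        rw [integral_sliceVolume hA, integral_sliceVolume hC, ofReal_geom_mean_measureReal
          hA.measure_lt_top.ne hC.measure_lt_top.ne hs.le ht.le]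
    _ ≤ ∫⁻ x, volume (slice (s • A + t • C) x) :=
        prekopa_leindler (hn.isIntervalDensity_sliceVolume hA hAc hA0)
          (hn.isIntervalDensity_sliceVolume hC hCc hC0) hs ht hst
          (hn.sliceVolume_le hA hC hAc hCc hs ht hst)
    _ = volume (s • A + t • C) :=
        lintegral_volume_slice ((hA.smul s).add (hC.smul t)).measurableSet

theorem multiplicativeBrunnMinkowski : ∀ n, MultiplicativeBrunnMinkowski n
  | 0 => multiplicativeBrunnMinkowski_zero
  | n + 1 => (multiplicativeBrunnMinkowski n).succ

lemma sSup_image_eval_zero_eq_of_volume_add_le (hA : IsCompact A) (hC : IsCompact C)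
    (hAc : Convex ℝ A) (hCc : Convex ℝ C) (hs : 0 < s) (ht : 0 < t) (hst : s + t = 1)
    (h0 : volume A ≠ 0) (h_vol : volume A = volume C) (h_moment : ∫ x in A, x 0 = ∫ x in C, x 0)
    (hle : volume (s • A + t • C) ≤ volume A) :
    sSup (Function.eval 0 '' A) = sSup (Function.eval 0 '' C) := by
  have hn := multiplicativeBrunnMinkowski n
  refine right_eq_of_prekopa_leindler_eq (h := fun x => volume (slice (s • A + t • C) x))
    (hn.isIntervalDensity_sliceVolume hA hAc h0)
    (hn.isIntervalDensity_sliceVolume hC hCc (h_vol ▸ h0))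
    hs ht hst ?_ ?_
    (hn.sliceVolume_le hA hC hAc hCc hs ht hst) ?_
  · rw [integral_sliceVolume hA, integral_sliceVolume hC, measureReal_def, measureReal_def, h_vol]
  · rw [integral_sliceVolume_mul_id hA, integral_sliceVolume_mul_id hC, h_moment]
  · rwa [integral_sliceVolume hA, ofReal_measureReal hA.measure_lt_top.ne,
      lintegral_volume_slice ((hA.smul s).add (hC.smul t)).measurableSet]

end BodyDensity

/-! ### Euclidean spaces and support functions -/

section Coordinates

variable {E : Type*} [NormedAddCommGroup E] [InnerProductSpace ℝ E] {n : ℕ}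

/-- The coordinates of an orthonormal basis, as functions into `ℝⁿ` with the product structure in
which slices are taken. -/
def coordEquiv (b : OrthonormalBasis (Fin n) ℝ E) : E ≃L[ℝ] (Fin n → ℝ) :=
  b.repr.toContinuousLinearEquiv.trans (EuclideanSpace.equiv (Fin n) ℝ)

lemma coordEquiv_apply (b : OrthonormalBasis (Fin n) ℝ E) (x : E) (i : Fin n) :
    coordEquiv b x i = inner ℝ (b i) x :=
  b.repr_apply_apply x i

lemma coordEquiv_image_smul_add_smul (b : OrthonormalBasis (Fin n) ℝ E) (A C : Set E) (s t : ℝ) :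
    coordEquiv b '' (s • A + t • C) = s • coordEquiv b '' A + t • coordEquiv b '' C := by
  rw [Set.image_add, image_smul_set, image_smul_set]

lemma exists_orthonormalBasis_apply_zero_eq [FiniteDimensional ℝ E] {v : E} (hv : ‖v‖ = 1) :
    ∃ (n : ℕ) (b : OrthonormalBasis (Fin (n + 1)) ℝ E), b 0 = v := by
  have : Nontrivial E := ⟨v, 0, by rintro rfl; simp at hv⟩
  obtain ⟨n, hn⟩ := Nat.exists_eq_succ_of_ne_zero (finrank_pos (R := ℝ) (M := E)).ne'
  have h_orthonormal : Orthonormal ℝ (({0} : Set (Fin (n + 1))).domRestrict fun _ => v) :=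
    ⟨fun _ => hv, fun i j hij => (hij (Subsingleton.elim i j)).elim⟩
  obtain ⟨b, hb⟩ := h_orthonormal.exists_orthonormalBasis_extension_of_card_eq (by simpa using hn)
  exact ⟨n, b, hb 0 rfl⟩

variable [MeasurableSpace E] [BorelSpace E]

lemma measurableEmbedding_coordEquiv (b : OrthonormalBasis (Fin n) ℝ E) :
    MeasurableEmbedding (coordEquiv b) :=
  (coordEquiv b).toHomeomorph.measurableEmbedding

variable [FiniteDimensional ℝ E]

lemma measurePreserving_coordEquiv (b : OrthonormalBasis (Fin n) ℝ E) :
    MeasurePreserving (coordEquiv b) :=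
  (PiLp.volume_preserving_ofLp (Fin n)).comp b.measurePreserving_repr

lemma volume_image_coordEquiv (b : OrthonormalBasis (Fin n) ℝ E) (A : Set E) :
    volume (coordEquiv b '' A) = volume A := by
  rw [← (measurePreserving_coordEquiv b).measure_preimage_emb (measurableEmbedding_coordEquiv b),
    preimage_image_eq _ (coordEquiv b).injective]

lemma setIntegral_image_coordEquiv {A : Set E} (hA : IsCompact A)
    (b : OrthonormalBasis (Fin n) ℝ E) (i : Fin n) :
    ∫ x in coordEquiv b '' A, x i = inner ℝ (b i) (∫ x in A, x) := by
  rw [(measurePreserving_coordEquiv b).setIntegral_image_emb (measurableEmbedding_coordEquiv b)]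
  simp only [coordEquiv_apply]
  exact integral_inner (continuous_id.continuousOn.integrableOn_compact hA) (b i)

end Coordinates

/-- The support function `h_A(v) = sup {⟨v, x⟩ : x ∈ A}` of a set. It is only meaningful for
nonempty bounded `A`, since `sSup` is `0` on other sets of reals. -/
def supportFunction {E : Type*} [NormedAddCommGroup E] [InnerProductSpace ℝ E] (A : Set E) (v : E) :
    ℝ :=
  sSup (inner ℝ v '' A)

lemma smul_vadd_set {S M : Type*} [Monoid S] [AddMonoid M] [DistribMulAction S M] (s : S) (p : M)
    (A : Set M) : s • (p +ᵥ A) = s • p +ᵥ s • A := by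
  simp only [← singleton_vadd, vadd_eq_add, smul_add, smul_set_singleton]

lemma setIntegral_id_vadd {E : Type*} [NormedAddCommGroup E] [NormedSpace ℝ E]
    [FiniteDimensional ℝ E] [MeasurableSpace E] [BorelSpace E] (μ : Measure E) [μ.IsAddHaarMeasure]
    {A : Set E} (hA : IsCompact A) (p : E) :
    ∫ x in p +ᵥ A, x ∂μ = μ.real A • p + ∫ x in A, x ∂μ := by
  have : CompleteSpace E := FiniteDimensional.complete ℝ E
  have h_const : IntegrableOn (fun _ => p) A μ := integrableOn_const hA.measure_lt_top.ne
  have h_id : IntegrableOn (fun x => x) A μ := continuous_id.continuousOn.integrableOn_compact hA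
  calc ∫ x in p +ᵥ A, x ∂μ = ∫ x in A, (p + x) ∂μ :=
        (measurePreserving_add_left μ p).setIntegral_image_emb (measurableEmbedding_addLeft p)
          (fun x => x) A
    _ = μ.real A • p + ∫ x in A, x ∂μ := by
        rw [integral_add h_const h_id, setIntegral_const]

section BrunnMinkowski

variable {E : Type*} [NormedAddCommGroup E] [InnerProductSpace ℝ E] {A C : Set E} {s t : ℝ}

lemma inner_le_supportFunction (hA : IsCompact A) {x : E} (hx : x ∈ A) (v : E) :
    inner ℝ v x ≤ supportFunction A v :=
  le_csSup (hA.image (by fun_prop)).bddAbove (mem_image_of_mem _ hx)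

lemma subset_of_supportFunction_le [CompleteSpace E] (hA : IsCompact A) (hC : IsClosed C)
    (hCc : Convex ℝ C) (hCne : C.Nonempty)
    (h : ∀ v : E, ‖v‖ = 1 → supportFunction A v ≤ supportFunction C v) : A ⊆ C := by
  intro x hxA
  by_contra hxC
  obtain ⟨φ, u, hφC, hφx⟩ := geometric_hahn_banach_closed_point hCc hC hxC
  set w := (InnerProductSpace.toDual ℝ E).symm φ
  have hw : ∀ y, inner ℝ w y = φ y := fun y => InnerProductSpace.toDual_symm_apply
  have hw_ne : w ≠ 0 := by
    intro h0
    obtain ⟨c, hc⟩ := hCne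
    have h_lt := (hφC c hc).trans hφx
    simp only [← hw, h0, inner_zero_left, lt_self_iff_false] at h_lt
  have hw_pos : 0 < ‖w‖⁻¹ := inv_pos.2 (norm_pos_iff.2 hw_ne)
  have h_unit : ∀ y, inner ℝ (‖w‖⁻¹ • w) y = ‖w‖⁻¹ * φ y := fun y => by
    rw [real_inner_smul_left, hw]
  have h_le : supportFunction C (‖w‖⁻¹ • w) ≤ ‖w‖⁻¹ * u := by
    refine csSup_le (hCne.image _) ?_
    rintro _ ⟨c, hc, rfl⟩
    rw [h_unit]
    exact mul_le_mul_of_nonneg_left (hφC c hc).le hw_pos.le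
  have h_lt : ‖w‖⁻¹ * u < supportFunction A (‖w‖⁻¹ • w) :=
    calc ‖w‖⁻¹ * u < inner ℝ (‖w‖⁻¹ • w) x := by
          rw [h_unit]
          exact mul_lt_mul_of_pos_left hφx hw_pos
      _ ≤ _ := inner_le_supportFunction hA hxA _
  exact (h _ (norm_smul_inv_norm (𝕜 := ℝ) hw_ne)).not_gt (h_le.trans_lt h_lt)

variable [FiniteDimensional ℝ E] [MeasurableSpace E] [BorelSpace E]

theorem volume_rpow_mul_volume_rpow_le (hA : IsCompact A) (hC : IsCompact C) (hAc : Convex ℝ A)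
    (hCc : Convex ℝ C) (hs : 0 < s) (ht : 0 < t) (hst : s + t = 1) :
    volume A ^ s * volume C ^ t ≤ volume (s • A + t • C) := by
  set e := coordEquiv (stdOrthonormalBasis ℝ E)
  have h := multiplicativeBrunnMinkowski _ (hA.image e.continuous) (hC.image e.continuous)
    (hAc.linear_image e.toLinearMap) (hCc.linear_image e.toLinearMap) hs ht hst
  rwa [← coordEquiv_image_smul_add_smul, volume_image_coordEquiv, volume_image_coordEquiv,
    volume_image_coordEquiv] at h

lemma supportFunction_eq_of_volume_add_le (hA : IsCompact A) (hC : IsCompact C)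
    (hAc : Convex ℝ A) (hCc : Convex ℝ C) (hs : 0 < s) (ht : 0 < t) (hst : s + t = 1)
    (h0 : volume A ≠ 0) (h_vol : volume A = volume C) (h_moment : ∫ x in A, x = ∫ x in C, x)
    (hle : volume (s • A + t • C) ≤ volume A) {v : E} (hv : ‖v‖ = 1) :
    supportFunction A v = supportFunction C v := by
  obtain ⟨n, b, rfl⟩ := exists_orthonormalBasis_apply_zero_eq hv
  set e := coordEquiv b
  have h_image : ∀ D : Set E, Function.eval 0 '' (e '' D) = inner ℝ (b 0) '' D := by
    intro D
    rw [image_image]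
    exact image_congr fun x _ => coordEquiv_apply b x 0
  have h_sSup := sSup_image_eval_zero_eq_of_volume_add_le (hA.image e.continuous)
    (hC.image e.continuous) (hAc.linear_image e.toLinearMap) (hCc.linear_image e.toLinearMap)
    hs ht hst (by rwa [volume_image_coordEquiv])
    (by rwa [volume_image_coordEquiv, volume_image_coordEquiv])
    (by rw [setIntegral_image_coordEquiv hA, setIntegral_image_coordEquiv hC, h_moment])
    (by rwa [← coordEquiv_image_smul_add_smul, volume_image_coordEquiv, volume_image_coordEquiv])
  rwa [h_image, h_image] at h_sSup

lemma eq_of_volume_add_le (hA : IsCompact A) (hC : IsCompact C) (hAc : Convex ℝ A)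
    (hCc : Convex ℝ C) (hs : 0 < s) (ht : 0 < t) (hst : s + t = 1) (h0 : volume A ≠ 0)
    (h_vol : volume A = volume C) (h_moment : ∫ x in A, x = ∫ x in C, x)
    (hle : volume (s • A + t • C) ≤ volume A) : A = C := by
  have h_support : ∀ v : E, ‖v‖ = 1 → supportFunction A v = supportFunction C v := fun v hv =>
    supportFunction_eq_of_volume_add_le hA hC hAc hCc hs ht hst h0 h_vol h_moment hle hv
  exact Subset.antisymm
    (subset_of_supportFunction_le hA hC.isClosed hCc (nonempty_of_measure_ne_zero (h_vol ▸ h0))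
      fun v hv => (h_support v hv).le)
    (subset_of_supportFunction_le hC hA.isClosed hAc (nonempty_of_measure_ne_zero h0)
      fun v hv => (h_support v hv).ge)

theorem exists_eq_vadd_of_volume_add_le (hA : IsCompact A) (hC : IsCompact C) (hAc : Convex ℝ A)
    (hCc : Convex ℝ C) (hs : 0 < s) (ht : 0 < t) (hst : s + t = 1) (h0 : volume A ≠ 0)
    (h_vol : volume A = volume C) (hle : volume (s • A + t • C) ≤ volume A) :
    ∃ p : E, C = p +ᵥ A := by
  have h_ne : volume.real A ≠ 0 := (measureReal_ne_zero_iff hA.measure_lt_top.ne).2 h0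
  set p : E := (volume.real A)⁻¹ • ((∫ x in C, x) - ∫ x in A, x)
  have h_moment : ∫ x in p +ᵥ A, x = ∫ x in C, x := by
    rw [setIntegral_id_vadd volume hA, smul_inv_smul₀ h_ne, sub_add_cancel]
  refine ⟨p, (eq_of_volume_add_le (hA.vadd p) hC (hAc.vadd p) hCc hs ht hst ?_ ?_ h_moment ?_).symm⟩
  · rwa [measure_vadd]
  · rwa [measure_vadd]
  · rwa [smul_vadd_set, vadd_add_assoc, measure_vadd, measure_vadd]

end BrunnMinkowski

/-! ### Volume roots and extremal pairs of bodies -/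

/-- The volume radius `V(A)^{1/d}` of a subset of a `d`-dimensional space, up to normalization: the
quantity which is homogeneous of degree one and superadditive on convex bodies. -/
def volumeRoot {E : Type*} [NormedAddCommGroup E] [InnerProductSpace ℝ E] [FiniteDimensional ℝ E]
    [MeasurableSpace E] [BorelSpace E] (A : Set E) : ℝ≥0∞ :=
  volume A ^ (1 / (finrank ℝ E : ℝ))

lemma smul_inv_smul_add_smul_inv_smul {E : Type*} [AddCommGroup E] [Module ℝ E] {x y : ℝ}
    (hx : 0 < x) (hy : 0 < y) (A C : Set E) :
    (x / (x + y)) • x⁻¹ • A + (y / (x + y)) • y⁻¹ • C = (x + y)⁻¹ • (A + C) := by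
  rw [smul_smul, smul_smul, smul_add]
  congr 2 <;> field_simp

lemma one_div_finrank_pos {E : Type*} [AddCommGroup E] [Module ℝ E] [FiniteDimensional ℝ E]
    [Nontrivial E] : 0 < 1 / (finrank ℝ E : ℝ) :=
  one_div_pos.2 (Nat.cast_pos.2 finrank_pos)

section VolumeRoot

variable {E : Type*} [NormedAddCommGroup E] [InnerProductSpace ℝ E] [FiniteDimensional ℝ E]
  [MeasurableSpace E] [BorelSpace E] {A C : Set E}

lemma volumeRoot_mono (h : A ⊆ C) : volumeRoot A ≤ volumeRoot C :=
  ENNReal.rpow_le_rpow (measure_mono h) (by positivity)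

lemma volumeRoot_ne_top (hA : volume A ≠ ∞) : volumeRoot A ≠ ∞ :=
  ENNReal.rpow_ne_top_of_nonneg (by positivity) hA

lemma volumeRoot_vadd (p : E) (A : Set E) : volumeRoot (p +ᵥ A) = volumeRoot A := by
  rw [volumeRoot, measure_vadd, volumeRoot]

lemma volumeRoot_neg (A : Set E) : volumeRoot (-A) = volumeRoot A := by
  rw [volumeRoot, Measure.measure_neg, volumeRoot]

lemma volumeRoot_le_volumeRoot_add (hC : C.Nonempty) : volumeRoot A ≤ volumeRoot (A + C) := by
  obtain ⟨c, hc⟩ := hC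
  rw [← volumeRoot_vadd c A, add_comm, ← singleton_vadd]
  exact volumeRoot_mono (add_subset_add_right (singleton_subset_iff.2 hc))

variable [Nontrivial E]

lemma volumeRoot_le_volumeRoot_iff : volumeRoot A ≤ volumeRoot C ↔ volume A ≤ volume C :=
  ENNReal.rpow_le_rpow_iff one_div_finrank_pos

lemma one_le_volumeRoot_iff : 1 ≤ volumeRoot A ↔ 1 ≤ volume A := by
  simpa only [volumeRoot, ENNReal.one_rpow] using
    ENNReal.rpow_le_rpow_iff (x := 1) (y := volume A) (one_div_finrank_pos (E := E))

lemma volumeRoot_le_one_iff : volumeRoot A ≤ 1 ↔ volume A ≤ 1 := by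
  simpa only [volumeRoot, ENNReal.one_rpow] using
    ENNReal.rpow_le_rpow_iff (x := volume A) (y := 1) (one_div_finrank_pos (E := E))

lemma volumeRoot_eq_zero_iff : volumeRoot A = 0 ↔ volume A = 0 :=
  ENNReal.rpow_eq_zero_iff_of_pos one_div_finrank_pos

lemma volumeRoot_smul {x : ℝ} (hx : 0 ≤ x) (A : Set E) :
    volumeRoot (x • A) = ENNReal.ofReal x * volumeRoot A := by
  rw [volumeRoot, Measure.addHaar_smul, abs_of_nonneg (by positivity), ENNReal.ofReal_pow hx,
    ENNReal.mul_rpow_of_nonneg _ _ (by positivity), one_div,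
    ENNReal.pow_rpow_inv_natCast finrank_pos.ne', volumeRoot, one_div]

lemma volumeRoot_inv_smul {x : ℝ} (hx : 0 < x) (A : Set E) :
    volumeRoot (x⁻¹ • A) = volumeRoot A / ENNReal.ofReal x := by
  rw [volumeRoot_smul (inv_nonneg.2 hx.le), ENNReal.ofReal_inv_of_pos hx, mul_comm, div_eq_mul_inv]

lemma one_le_volume_inv_smul_iff {x : ℝ} (hx : 0 < x) :
    1 ≤ volume (x⁻¹ • A) ↔ ENNReal.ofReal x ≤ volumeRoot A := by
  rw [← one_le_volumeRoot_iff, volumeRoot_inv_smul hx, ENNReal.le_div_iff_mul_le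
    (.inl (ENNReal.ofReal_pos.2 hx).ne') (.inl ENNReal.ofReal_ne_top), one_mul]

lemma volume_inv_smul_le_one_iff {x : ℝ} (hx : 0 < x) :
    volume (x⁻¹ • A) ≤ 1 ↔ volumeRoot A ≤ ENNReal.ofReal x := by
  rw [← volumeRoot_le_one_iff, volumeRoot_inv_smul hx, ENNReal.div_le_iff_le_mul
    (.inl (ENNReal.ofReal_pos.2 hx).ne') (.inl ENNReal.ofReal_ne_top), one_mul]

lemma exists_volumeRoot_eq_ofReal (hA : volume A ≠ ∞) (h0 : volume A ≠ 0) :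
    ∃ x : ℝ, 0 < x ∧ volumeRoot A = ENNReal.ofReal x ∧ volume (x⁻¹ • A) = 1 := by
  have h_ofReal := (ENNReal.ofReal_toReal (volumeRoot_ne_top hA)).symm
  have h_pos : 0 < (volumeRoot A).toReal :=
    ENNReal.toReal_pos (volumeRoot_eq_zero_iff.not.2 h0) (volumeRoot_ne_top hA)
  exact ⟨_, h_pos, h_ofReal, le_antisymm ((volume_inv_smul_le_one_iff h_pos).2 h_ofReal.le)
    ((one_le_volume_inv_smul_iff h_pos).2 h_ofReal.ge)⟩

lemma volumeRoot_closedBall (p : E) {ρ : ℝ} (hρ : 0 ≤ ρ) :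
    volumeRoot (closedBall p ρ) = ENNReal.ofReal ρ * volumeRoot (closedBall (0 : E) 1) := by
  rw [← affinity_unitClosedBall hρ, volumeRoot_vadd, volumeRoot_smul hρ]

theorem volumeRoot_add_le (hA : IsCompact A) (hC : IsCompact C) (hAc : Convex ℝ A)
    (hCc : Convex ℝ C) (hAne : A.Nonempty) (hCne : C.Nonempty) :
    volumeRoot A + volumeRoot C ≤ volumeRoot (A + C) := by
  by_cases hA0 : volume A = 0
  · rw [volumeRoot_eq_zero_iff.2 hA0, zero_add, add_comm A]
    exact volumeRoot_le_volumeRoot_add hAne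
  by_cases hC0 : volume C = 0
  · rw [volumeRoot_eq_zero_iff.2 hC0, add_zero]
    exact volumeRoot_le_volumeRoot_add hCne
  obtain ⟨x, hx, hAx, hA1⟩ := exists_volumeRoot_eq_ofReal hA.measure_lt_top.ne hA0
  obtain ⟨y, hy, hCy, hC1⟩ := exists_volumeRoot_eq_ofReal hC.measure_lt_top.ne hC0
  have h_normalized := volume_rpow_mul_volume_rpow_le (hA.smul x⁻¹) (hC.smul y⁻¹) (hAc.smul x⁻¹)
    (hCc.smul y⁻¹) (s := x / (x + y)) (t := y / (x + y)) (by positivity) (by positivity)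
    (by field_simp)
  rwa [hA1, hC1, ENNReal.one_rpow, ENNReal.one_rpow, one_mul,
    smul_inv_smul_add_smul_inv_smul hx hy, one_le_volume_inv_smul_iff (by positivity),
    ENNReal.ofReal_add hx.le hy.le, ← hAx, ← hCy] at h_normalized

theorem exists_eq_vadd_smul_of_volumeRoot_add_le (hA : IsCompact A) (hC : IsCompact C)
    (hAc : Convex ℝ A) (hCc : Convex ℝ C) (hA0 : volume A ≠ 0) (hC0 : volume C ≠ 0)
    (hle : volumeRoot (A + C) ≤ volumeRoot A + volumeRoot C) :
    ∃ (p : E) (k : ℝ), 0 < k ∧ C = p +ᵥ k • A := by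
  obtain ⟨x, hx, hAx, hA1⟩ := exists_volumeRoot_eq_ofReal hA.measure_lt_top.ne hA0
  obtain ⟨y, hy, hCy, hC1⟩ := exists_volumeRoot_eq_ofReal hC.measure_lt_top.ne hC0
  have h_normalized : volume ((x + y)⁻¹ • (A + C)) ≤ 1 := by
    rwa [volume_inv_smul_le_one_iff (by positivity), ENNReal.ofReal_add hx.le hy.le, ← hAx, ← hCy]
  rw [← smul_inv_smul_add_smul_inv_smul hx hy] at h_normalized
  obtain ⟨p, hp⟩ := exists_eq_vadd_of_volume_add_le (hA.smul x⁻¹) (hC.smul y⁻¹) (hAc.smul x⁻¹)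
    (hCc.smul y⁻¹) (s := x / (x + y)) (t := y / (x + y)) (by positivity) (by positivity)
    (by field_simp) (by simp [hA1]) (by rw [hA1, hC1]) (by rwa [hA1])
  refine ⟨y • p, y * x⁻¹, by positivity, ?_⟩
  rw [mul_smul, ← smul_vadd_set, ← hp, smul_inv_smul₀ hy.ne']

end VolumeRoot

lemma subset_closedBall_neg {E : Type*} [SeminormedAddCommGroup E] {A C : Set E} {r : ℝ}
    (h : A + C ⊆ closedBall 0 r) {c : E} (hc : c ∈ C) : A ⊆ closedBall (-c) r := by
  intro a ha
  rw [mem_closedBall, dist_eq_norm, sub_neg_eq_add, ← mem_closedBall_zero_iff]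
  exact h (add_mem_add ha hc)

section ClosedBall

variable {E : Type*} [NormedAddCommGroup E] [NormedSpace ℝ E] {A : Set E} {r : ℝ}

lemma add_dist_le_of_closedBall_subset [Nontrivial E] {p q : E} {ρ : ℝ} (hρ : 0 ≤ ρ)
    (h : closedBall p ρ ⊆ closedBall q r) : ρ + dist p q ≤ r := by
  obtain ⟨u, hu, hpq⟩ : ∃ u : E, ‖u‖ = 1 ∧ p - q = dist p q • u := by
    by_cases h0 : p - q = 0
    · obtain ⟨u, hu⟩ := exists_norm_eq E zero_le_one
      exact ⟨u, hu, by simp [dist_eq_norm, h0]⟩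
    · exact ⟨‖p - q‖⁻¹ • (p - q), norm_smul_inv_norm (𝕜 := ℝ) h0, by
        rw [dist_eq_norm, smul_inv_smul₀ (norm_ne_zero_iff.2 h0)]⟩
  have h_mem : p + ρ • u ∈ closedBall q r := h (by
    simp [mem_closedBall, dist_eq_norm, norm_smul, hu, abs_of_nonneg hρ])
  rwa [mem_closedBall, dist_eq_norm, add_sub_right_comm, hpq, ← add_smul, norm_smul, hu, mul_one,
    Real.norm_of_nonneg (by positivity), add_comm] at h_mem

lemma eq_closedBall_of_add_vadd_smul_eq (hAc : Convex ℝ A) {p : E} {k : ℝ} (hk : 0 < k)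
    (h : A + (p +ᵥ k • A) = closedBall 0 r) :
    A = closedBall ((1 + k)⁻¹ • -p) ((1 + k)⁻¹ * r) := by
  have hk' : 0 < 1 + k := by positivity
  have h_dilate : (1 + k) • A = closedBall (-p) r := by
    have h_sum : A + (p +ᵥ k • A) = p +ᵥ (1 + k) • A := by
      rw [hAc.add_smul zero_le_one hk.le, one_smul, ← singleton_vadd, ← singleton_vadd,
        vadd_eq_add, vadd_eq_add, add_left_comm]
    rw [← neg_vadd_vadd p ((1 + k) • A), ← h_sum, h, vadd_closedBall, vadd_eq_add, add_zero]
  rw [← inv_smul_smul₀ hk'.ne' A, h_dilate, smul_closedBall' (inv_ne_zero hk'.ne'),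
    Real.norm_of_nonneg (by positivity)]

lemma eq_closedBall_of_measure_le [ProperSpace E] [MeasurableSpace E] [BorelSpace E]
    (μ : Measure E) [IsFiniteMeasureOnCompacts μ] [μ.IsOpenPosMeasure] {p : E} (hA : IsClosed A)
    (hAne : A.Nonempty) (hsub : A ⊆ closedBall p r) (hle : μ (closedBall p r) ≤ μ A) :
    A = closedBall p r := by
  have hr : 0 ≤ r := nonempty_closedBall.1 (hAne.mono hsub)
  rcases hr.eq_or_lt with rfl | hr
  · rw [closedBall_zero] at hsub ⊢
    exact hAne.subset_singleton_iff.1 hsub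
  refine hsub.antisymm ?_
  have h_null : μ (closedBall p r \ A) = 0 := by
    rw [measure_sdiff hsub hA.measurableSet.nullMeasurableSet
      (measure_ne_top_of_subset hsub measure_closedBall_lt_top.ne)]
    exact tsub_eq_zero_of_le hle
  have h_empty : ball p r \ A = ∅ := by
    rw [← (isOpen_ball.sdiff hA).measure_eq_zero_iff μ]
    exact measure_mono_null (sdiff_subset_sdiff_left ball_subset_closedBall) h_null
  rw [← closure_ball p hr.ne']
  exact closure_minimal (sdiff_eq_empty.1 h_empty) hA

end ClosedBall

section ExtremalPair

variable {E : Type*} [NormedAddCommGroup E] [InnerProductSpace ℝ E] [FiniteDimensional ℝ E]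
  [Nontrivial E] [MeasurableSpace E] [BorelSpace E] {A C : Set E} {r : ℝ}

lemma eq_closedBall_neg_of_volume_eq_zero (hA : IsClosed A) (hAne : A.Nonempty)
    (hsub : A + C ⊆ closedBall 0 r)
    (hle : volumeRoot (closedBall (0 : E) r) ≤ volumeRoot A + volumeRoot C) (hC0 : volume C = 0)
    {c : E} (hc : c ∈ C) : A = closedBall (-c) r := by
  rw [volumeRoot_eq_zero_iff.2 hC0, add_zero, volumeRoot_le_volumeRoot_iff,
    ← Measure.addHaar_closedBall_center volume (-c)] at hle
  exact eq_closedBall_of_measure_le volume hA hAne (subset_closedBall_neg hsub hc) hle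

theorem exists_eq_closedBall_of_volumeRoot_le (hA : IsCompact A) (hC : IsCompact C)
    (hAc : Convex ℝ A) (hCc : Convex ℝ C) (hAne : A.Nonempty) (hCne : C.Nonempty)
    (hsub : A + C ⊆ closedBall 0 r)
    (hle : volumeRoot (closedBall (0 : E) r) ≤ volumeRoot A + volumeRoot C) :
    ∃ (p : E) (ρ : ℝ), 0 ≤ ρ ∧ ρ ≤ r ∧ A = closedBall p ρ := by
  have hr : 0 ≤ r := nonempty_closedBall.1 ((hAne.add hCne).mono hsub)
  by_cases hC0 : volume C = 0
  · exact ⟨_, r, hr, le_rfl, eq_closedBall_neg_of_volume_eq_zero hA.isClosed hAne hsub hle hC0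
      hCne.some_mem⟩
  by_cases hA0 : volume A = 0
  · obtain ⟨a, ha⟩ := hAne
    have h_ball : ∀ b ∈ A, C = closedBall (-b) r := fun b hb =>
      eq_closedBall_neg_of_volume_eq_zero hC.isClosed hCne (by rwa [add_comm])
        (by rwa [add_comm]) hA0 hb
    refine ⟨a, 0, le_rfl, hr, ?_⟩
    rw [closedBall_zero, eq_singleton_iff_unique_mem]
    refine ⟨ha, fun b hb => ?_⟩
    have h_dist := add_dist_le_of_closedBall_subset hr ((h_ball b hb).symm.trans (h_ball a ha)).le
    rw [dist_neg_neg] at h_dist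
    exact dist_le_zero.1 (by linarith)
  obtain ⟨p, k, hk, rfl⟩ := exists_eq_vadd_smul_of_volumeRoot_add_le hA hC hAc hCc hA0 hC0
    ((volumeRoot_mono hsub).trans hle)
  have h_add : A + (p +ᵥ k • A) = closedBall 0 r := by
    refine eq_closedBall_of_measure_le volume (hA.add hC).isClosed (hAne.add hCne) hsub ?_
    rw [← volumeRoot_le_volumeRoot_iff]
    exact hle.trans (volumeRoot_add_le hA hC hAc hCc hAne hCne)
  exact ⟨_, _, by positivity, mul_le_of_le_one_left hr (inv_le_one_of_one_le₀ (by linarith)),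
    eq_closedBall_of_add_vadd_smul_eq hAc hk h_add⟩

end ExtremalPair

/-! ### Ball bodies -/

section BallBody

variable {d : ℕ} {r : ℝ} {A : Set (EuclideanSpace ℝ (Fin d))}

lemma isClosed_ballBody (r : ℝ) (A : Set (EuclideanSpace ℝ (Fin d))) : IsClosed (ballBody r A) :=
  isClosed_biInter fun _ _ => isClosed_closedBall

lemma convex_ballBody (r : ℝ) (A : Set (EuclideanSpace ℝ (Fin d))) : Convex ℝ (ballBody r A) :=
  convex_iInter₂ fun a _ => convex_closedBall a r

lemma isCompact_ballBody (hA : A.Nonempty) : IsCompact (ballBody r A) :=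
  (isCompact_closedBall hA.some r).of_isClosed_subset (isClosed_ballBody r A)
    (biInter_subset_of_mem hA.some_mem)

lemma subset_ballBody_ballBody (r : ℝ) (A : Set (EuclideanSpace ℝ (Fin d))) :
    A ⊆ ballBody r (ballBody r A) :=
  fun _ ha => mem_iInter₂.2 fun _ hx => mem_closedBall_comm.1 (mem_iInter₂.1 hx _ ha)

lemma ballBody_add_neg_subset (r : ℝ) (A : Set (EuclideanSpace ℝ (Fin d))) :
    ballBody r A + -A ⊆ closedBall 0 r := by
  refine add_subset_iff.2 fun x hx a ha => ?_
  rw [mem_closedBall_zero_iff, ← sub_neg_eq_add, ← dist_eq_norm]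
  exact mem_iInter₂.1 hx (-a) ha

lemma closedBall_sub_subset_ballBody_closedBall (p : EuclideanSpace ℝ (Fin d)) (ρ r : ℝ) :
    closedBall p (r - ρ) ⊆ ballBody r (closedBall p ρ) := by
  refine fun x hx => mem_iInter₂.2 fun a ha => ?_
  rw [mem_closedBall] at hx ha ⊢
  linarith [dist_triangle_right x a p]

lemma volumeRoot_euclideanSpace (A : Set (EuclideanSpace ℝ (Fin d))) :
    volumeRoot A = volume A ^ ((1 : ℝ) / d) := by
  rw [volumeRoot, finrank_euclideanSpace_fin]

variable [NeZero d]

lemma volumeRoot_ballBody_add_le (hA : IsCompact A) (hAc : Convex ℝ A) (hAne : A.Nonempty)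
    (hArne : (ballBody r A).Nonempty) :
    volumeRoot (ballBody r A) + volumeRoot A ≤
      volumeRoot (closedBall (0 : EuclideanSpace ℝ (Fin d)) r) := by
  rw [← volumeRoot_neg A]
  exact (volumeRoot_add_le (isCompact_ballBody hAne) hA.neg (convex_ballBody r A) hAc.neg hArne
    hAne.neg).trans (volumeRoot_mono (ballBody_add_neg_subset r A))

theorem exists_ballBody_eq_closedBall (hA : IsCompact A) (hAc : Convex ℝ A) (hAne : A.Nonempty)
    (hArne : (ballBody r A).Nonempty)
    (hle : volumeRoot (closedBall (0 : EuclideanSpace ℝ (Fin d)) r) ≤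
      volumeRoot (ballBody r A) + volumeRoot A) :
    ∃ (p : EuclideanSpace ℝ (Fin d)) (ρ : ℝ), 0 ≤ ρ ∧ ρ ≤ r ∧ ballBody r A = closedBall p ρ := by
  rw [← volumeRoot_neg A] at hle
  exact exists_eq_closedBall_of_volumeRoot_le (isCompact_ballBody hAne) hA.neg
    (convex_ballBody r A) hAc.neg hArne hAne.neg (ballBody_add_neg_subset r A) hle

lemma volumeRoot_ballBody_ballBody_add_le (hAne : A.Nonempty) (hArne : (ballBody r A).Nonempty) :
    volumeRoot (ballBody r (ballBody r A)) + volumeRoot (ballBody r A) ≤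
      volumeRoot (closedBall (0 : EuclideanSpace ℝ (Fin d)) r) :=
  volumeRoot_ballBody_add_le (isCompact_ballBody hAne) (convex_ballBody r A) hArne
    (hAne.mono (subset_ballBody_ballBody r A))

theorem volumeRoot_add_volumeRoot_ballBody_le (hAne : A.Nonempty)
    (hArne : (ballBody r A).Nonempty) :
    volumeRoot A + volumeRoot (ballBody r A) ≤
      volumeRoot (closedBall (0 : EuclideanSpace ℝ (Fin d)) r) :=
  (add_le_add_left (volumeRoot_mono (subset_ballBody_ballBody r A)) _).trans
    (volumeRoot_ballBody_ballBody_add_le hAne hArne)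

theorem exists_eq_closedBall_of_volumeRoot_add_volumeRoot_ballBody_eq (hA : IsClosed A)
    (hAne : A.Nonempty) (hArne : (ballBody r A).Nonempty)
    (heq : volumeRoot A + volumeRoot (ballBody r A) =
      volumeRoot (closedBall (0 : EuclideanSpace ℝ (Fin d)) r)) :
    ∃ (p : EuclideanSpace ℝ (Fin d)) (ρ : ℝ), 0 ≤ ρ ∧ ρ ≤ r ∧ A = closedBall p ρ := by
  have h_sub := subset_ballBody_ballBody r A
  have h_bidual : volumeRoot (ballBody r (ballBody r A)) ≤ volumeRoot A := by
    rw [← ENNReal.add_le_add_iff_right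
      (volumeRoot_ne_top (isCompact_ballBody (r := r) hAne).measure_lt_top.ne), heq]
    exact volumeRoot_ballBody_ballBody_add_le hAne hArne
  obtain ⟨p, ρ, hρ, hρr, h_ball⟩ := exists_ballBody_eq_closedBall (isCompact_ballBody hAne)
    (convex_ballBody r A) hArne (hAne.mono h_sub)
    (heq.ge.trans (add_le_add_left (volumeRoot_mono h_sub) _))
  rw [h_ball] at h_sub h_bidual
  exact ⟨p, ρ, hρ, hρr,
    eq_closedBall_of_measure_le volume hA hAne h_sub (volumeRoot_le_volumeRoot_iff.1 h_bidual)⟩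

theorem volumeRoot_closedBall_le_add_volumeRoot_ballBody (p : EuclideanSpace ℝ (Fin d)) {ρ : ℝ}
    (hρ : 0 ≤ ρ) (hρr : ρ ≤ r) :
    volumeRoot (closedBall (0 : EuclideanSpace ℝ (Fin d)) r) ≤
      volumeRoot (closedBall p ρ) + volumeRoot (ballBody r (closedBall p ρ)) :=
  calc volumeRoot (closedBall (0 : EuclideanSpace ℝ (Fin d)) r)
      = volumeRoot (closedBall p ρ) + volumeRoot (closedBall p (r - ρ)) := by
        rw [volumeRoot_closedBall _ (hρ.trans hρr), volumeRoot_closedBall _ hρ,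
          volumeRoot_closedBall _ (sub_nonneg.2 hρr), ← add_mul,
          ← ENNReal.ofReal_add hρ (sub_nonneg.2 hρr), add_sub_cancel]
    _ ≤ volumeRoot (closedBall p ρ) + volumeRoot (ballBody r (closedBall p ρ)) := by
        gcongr
        exact volumeRoot_mono (closedBall_sub_subset_ballBody_closedBall p ρ r)

end BallBody

theorem brunnMinkowski_rBallBody_general {d : ℕ} (hd : d ≠ 0) {r : ℝ}
    {A : Set (EuclideanSpace ℝ (Fin d))} (hA : IsClosed A) (hAne : A.Nonempty)
    (hArne : (ballBody r A).Nonempty) :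
    volume A ^ ((1 : ℝ) / d) + volume (ballBody r A) ^ ((1 : ℝ) / d) ≤
        volume (closedBall (0 : EuclideanSpace ℝ (Fin d)) r) ^ ((1 : ℝ) / d) ∧
      (volume A ^ ((1 : ℝ) / d) + volume (ballBody r A) ^ ((1 : ℝ) / d) =
          volume (closedBall (0 : EuclideanSpace ℝ (Fin d)) r) ^ ((1 : ℝ) / d) ↔
        ∃ (p : EuclideanSpace ℝ (Fin d)) (ρ : ℝ), 0 ≤ ρ ∧ ρ ≤ r ∧ A = closedBall p ρ) := by
  have : NeZero d := ⟨hd⟩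
  simp only [← volumeRoot_euclideanSpace]
  have h_le := volumeRoot_add_volumeRoot_ballBody_le hAne hArne
  refine ⟨h_le, exists_eq_closedBall_of_volumeRoot_add_volumeRoot_ballBody_eq hA hAne hArne, ?_⟩
  rintro ⟨p, ρ, hρ, hρr, rfl⟩
  exact h_le.antisymm (volumeRoot_closedBall_le_add_volumeRoot_ballBody p hρ hρr)

/-- The Brunn–Minkowski step: for a nonempty `r`-ball body `A ⊆ ℝ^d` with `A^r` nonempty,
`V_d(A)^{1/d} + V_d(A^r)^{1/d} ≤ V_d(B[o,r])^{1/d}`, with equality iff `A` is a closed ball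
of radius at most `r`. -/
theorem brunnMinkowski_rBallBody {d : ℕ} (hd : 1 < d) {r : ℝ} (hr : 0 < r)
    {X A : Set (EuclideanSpace ℝ (Fin d))} (hX : X.Nonempty) (hA : A = ballBody r X)
    (hAne : A.Nonempty) (hArne : (ballBody r A).Nonempty) :
    volume A ^ ((1 : ℝ) / d) + volume (ballBody r A) ^ ((1 : ℝ) / d) ≤
        volume (closedBall (0 : EuclideanSpace ℝ (Fin d)) r) ^ ((1 : ℝ) / d) ∧
      (volume A ^ ((1 : ℝ) / d) + volume (ballBody r A) ^ ((1 : ℝ) / d) =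
          volume (closedBall (0 : EuclideanSpace ℝ (Fin d)) r) ^ ((1 : ℝ) / d) ↔
        ∃ (p : EuclideanSpace ℝ (Fin d)) (ρ : ℝ), 0 ≤ ρ ∧ ρ ≤ r ∧ A = closedBall p ρ) := by
  exact brunnMinkowski_rBallBody_general (by lia) (hA ▸ isClosed_ballBody r X) hAne hArne
end
end
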